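/- arXiv:1612.03295 — 2 statements merged into one kernel-verified Lean document; each statement's English description precedes it below -/
import Mathlib

section
/- Let w be the unique radial positive solution of Δw − w + w³ = 0 in ℝ², let h ∈ C²(ℝ²) be homogeneous of degree p ≥ 2 with H(y) = ∫h(x+y)w² having a unique critical point y₀, let λ = ((p/2)∫h(x+y₀)w²)^{1/(2+p)}, a* = ‖w‖₂², let ψ₁ solve ∇ψ₁(0)=0, (−Δ+1−3w²)ψ₁ = −w³/a* − h(x+y₀)w/λ^{2+p}, let ψ₂ = −(1/2)(w + x·∇w), and let ψ₅ be the unique solution of ∇ψ₅(0)=0 and (−Δ+1−3w²)ψ₅ = 6wψ₁ψ₂ + ψ₁ − (3w²/a* + h(x+y₀)/λ^{2+p})ψ₂ − (w/(2λ^{2+p}))(y₀·∇h(x+y₀)). Then 2∫_{ℝ²} wψ₅ + 2∫_{ℝ²} ψ₁ψ₂ = −(2+p)/2. -/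
noncomputable section
open MeasureTheory Filter Real Set
open scoped RealInnerProductSpace Topology

abbrev R2 : Type := EuclideanSpace ℝ (Fin 2)

/-- The Laplacian of `f : ℝ² → ℝ`. -/
def lap (f : R2 → ℝ) (x : R2) : ℝ :=
  ∑ i : Fin 2, fderiv ℝ (fun y => fderiv ℝ f y (EuclideanSpace.single i 1)) x
    (EuclideanSpace.single i 1)

/-- The linearized operator `L = -Δ + (1 - 3 w²)` applied to `f`. -/
def Lop (w f : R2 → ℝ) (x : R2) : ℝ := -lap f x + (1 - 3 * (w x) ^ 2) * f x

/-- `x · ∇f`. -/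
def xgrad (f : R2 → ℝ) (x : R2) : ℝ := ⟪x, gradient f x⟫

/-- First partial derivative `∂f/∂x₁`. -/
def pd1 (f : R2 → ℝ) (x : R2) : ℝ := fderiv ℝ f x (EuclideanSpace.single 0 1)

/-- `w` is the (radial positive) ground state of `Δw - w + w³ = 0` in `ℝ²`, `w ∈ H¹`. -/
structure IsGroundState (w : R2 → ℝ) : Prop where
  smooth : ContDiff ℝ 2 w
  pos : ∀ x, 0 < w x
  radial : ∀ x y : R2, ‖x‖ = ‖y‖ → w x = w y
  eqn : ∀ x, lap w x - w x + (w x) ^ 3 = 0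
  sqInt : Integrable fun x => (w x) ^ 2
  quarticInt : Integrable fun x => (w x) ^ 4
  gradSqInt : Integrable fun x => ‖gradient w x‖ ^ 2

/-- `h` is homogeneous of degree `p`. -/
def Homog (h : R2 → ℝ) (p : ℝ) : Prop :=
  ∀ t : ℝ, 0 < t → ∀ x : R2, h (t • x) = t ^ p * h x

/-- `H(y) = ∫ h(x+y) w(x)² dx`. -/
def Hfun (h w : R2 → ℝ) (y : R2) : ℝ := ∫ x, h (x + y) * (w x) ^ 2

/-- Determinant of the Hessian of `H` at `y`. -/
def hessDet (H : R2 → ℝ) (y : R2) : ℝ :=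
  (fderiv ℝ (fun z => fderiv ℝ H z (EuclideanSpace.single 0 1)) y (EuclideanSpace.single 0 1)) *
    (fderiv ℝ (fun z => fderiv ℝ H z (EuclideanSpace.single 1 1)) y (EuclideanSpace.single 1 1)) -
  (fderiv ℝ (fun z => fderiv ℝ H z (EuclideanSpace.single 0 1)) y (EuclideanSpace.single 1 1)) *
    (fderiv ℝ (fun z => fderiv ℝ H z (EuclideanSpace.single 1 1)) y (EuclideanSpace.single 0 1))

/-- The Gross–Pitaevskii energy functional. -/
def GPe (V : R2 → ℝ) (a : ℝ) (u : R2 → ℝ) : ℝ :=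
  (∫ x, ‖gradient u x‖ ^ 2) + (∫ x, V x * (u x) ^ 2) - a / 2 * ∫ x, (u x) ^ 4

/-- Admissible class: `u ∈ H¹`, `∫ V u² < ∞`, `‖u‖₂ = 1`. -/
def Admissible (V : R2 → ℝ) (u : R2 → ℝ) : Prop :=
  Integrable (fun x => (u x) ^ 2) ∧ Integrable (fun x => ‖gradient u x‖ ^ 2) ∧
    Integrable (fun x => V x * (u x) ^ 2) ∧ (∫ x, (u x) ^ 2) = 1

/-- `e(a)`, the ground state energy. -/
def gpInf (V : R2 → ℝ) (a : ℝ) : ℝ := sInf (GPe V a '' {u | Admissible V u})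

/-- `u` is a positive minimizer of `e(a)`. -/
def IsPosMinimizer (V : R2 → ℝ) (a : ℝ) (u : R2 → ℝ) : Prop :=
  Admissible V u ∧ GPe V a u = gpInf V a ∧ ∀ x, 0 < u x

/-- `x0` is the unique maximum point of `u`. -/
def IsUniqueMaxPt (u : R2 → ℝ) (x0 : R2) : Prop :=
  IsMaxOn u univ x0 ∧ ∀ z, IsMaxOn u univ z → z = x0

/-- The Lagrange multiplier `μ_a = e(a) - (a/2)∫u⁴`. -/
def lagrangeMul (V : R2 → ℝ) (a : ℝ) (u : R2 → ℝ) : ℝ :=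
  gpInf V a - a / 2 * ∫ x, (u x) ^ 4

/-- A bounded function on `ℝ²`. -/
def BddFun (f : R2 → ℝ) : Prop := ∃ M, ∀ x, |f x| ≤ M

structure RadData (w : R2 → ℝ) (u u1 u2 : ℝ → ℝ) : Prop where
  wu : ∀ x, w x = u ‖x‖
  d1 : ∀ r, HasDerivAt u (u1 r) r
  d2 : ∀ r, HasDerivAt u1 (u2 r) r
  c2 : Continuous u2
  fd : ∀ x : R2, x ≠ 0 → ∀ v, fderiv ℝ w x v = u1 ‖x‖ * (⟪x, v⟫ / ‖x‖)
  ode : ∀ r, 0 < r → u2 r + u1 r / r = u r - u r ^ 3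

lemma norm_hasFDerivAt (x : R2) (hx : x ≠ 0) :
    HasFDerivAt (fun y : R2 => ‖y‖) ((1 / ‖x‖) • innerSL ℝ x) x := by
  have h1 := (hasStrictFDerivAt_norm_sq x).hasFDerivAt
  have hn : ‖x‖ ≠ 0 := norm_ne_zero_iff.2 hx
  have h2 := h1.sqrt (by positivity)
  have e : (fun y : R2 => √(‖y‖ ^ 2)) = fun y => ‖y‖ := by
    funext y; exact Real.sqrt_sq (norm_nonneg y)
  rw [e, Real.sqrt_sq (norm_nonneg x)] at h2
  convert! h2 using 1
  ext v
  simp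
  field_simp

lemma radData_exists (w : R2 → ℝ) (hw : IsGroundState w) : ∃ u u1 u2, RadData w u u1 u2 := by
  set e : R2 := EuclideanSpace.single 0 1 with he
  set e' : R2 := EuclideanSpace.single 1 1 with he'
  have hen : ‖e‖ = 1 := by simp [he]
  have hwd : Differentiable ℝ w := hw.smooth.differentiable (by norm_num)
  have hline : ∀ r : ℝ, HasDerivAt (fun s : ℝ => s • e) e r := by
    intro r
    simpa using (hasDerivAt_id r).smul_const e
  have hg1 : ∀ v : R2, ContDiff ℝ 1 (fun y => fderiv ℝ w y v) := fun v =>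
    (hw.smooth.fderiv_right (m := 1) (by norm_num)).clm_apply contDiff_const
  have hwu : ∀ x, w x = w (‖x‖ • e) := by
    intro x; apply hw.radial; rw [norm_smul, hen]; simp
  have d1 : ∀ r, HasDerivAt (fun r : ℝ => w (r • e)) (fderiv ℝ w (r • e) e) r := fun r =>
    (hwd (r • e)).hasFDerivAt.comp_hasDerivAt r (hline r)
  have d2 : ∀ r, HasDerivAt (fun r : ℝ => fderiv ℝ w (r • e) e)
      (fderiv ℝ (fun y => fderiv ℝ w y e) (r • e) e) r := fun r =>
    ((((hg1 e).differentiable (by norm_num)) (r • e)).hasFDerivAt.comp_hasDerivAt r (hline r) :)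
  have fd : ∀ x : R2, x ≠ 0 → ∀ v, fderiv ℝ w x v =
      fderiv ℝ w (‖x‖ • e) e * (⟪x, v⟫ / ‖x‖) := by
    intro x hx v
    have h1 := (d1 ‖x‖).comp_hasFDerivAt x (norm_hasFDerivAt x hx)
    have h2 : ((fun r : ℝ => w (r • e)) ∘ fun y : R2 => ‖y‖) = w := by
      funext y; exact (hwu y).symm
    rw [h2] at h1
    rw [h1.fderiv]
    simp
    left
    field_simp
  refine ⟨fun r => w (r • e), fun r => fderiv ℝ w (r • e) e,
    fun r => fderiv ℝ (fun y => fderiv ℝ w y e) (r • e) e, hwu, d1, d2, ?_, fd, ?_⟩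
  · exact (((hg1 e).continuous_fderiv (by norm_num)).comp
      (continuous_id.smul continuous_const)).clm_apply continuous_const
  · intro r hr
    have heq := hw.eqn (r • e)
    have h22 : fderiv ℝ (fun y => fderiv ℝ w y e') (r • e) e' = fderiv ℝ w (r • e) e / r := by
      have hl : HasDerivAt (fun s : ℝ => r • e + s • e') e' 0 := by
        simpa using ((hasDerivAt_id (0:ℝ)).smul_const e').const_add (r • e)
      have h1 : HasDerivAt (fun s : ℝ => fderiv ℝ w (r • e + s • e') e')
          (fderiv ℝ (fun y => fderiv ℝ w y e') (r • e) e') 0 := by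
        have := (((hg1 e').differentiable (by norm_num)) (r • e + (0:ℝ) • e')).hasFDerivAt.comp_hasDerivAt
          (0:ℝ) hl
        simpa using! this
      have hip : ∀ s : ℝ, ⟪r • e + s • e', e'⟫ = s := by
        intro s
        simp [he, he', inner_add_left, inner_smul_left, EuclideanSpace.inner_single_right]
      have hip2 : ∀ s : ℝ, ⟪r • e + s • e', e⟫ = r := by
        intro s
        simp [he, he', inner_add_left, inner_smul_left, EuclideanSpace.inner_single_right]
      have hne : ∀ s : ℝ, r • e + s • e' ≠ 0 := by
        intro s h0
        have := hip2 s
        rw [h0] at this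
        simp at this
        exact hr.ne this
      have hf : (fun s : ℝ => fderiv ℝ w (r • e + s • e') e') =
          fun s => s * (fderiv ℝ w (‖r • e + s • e'‖ • e) e / ‖r • e + s • e'‖) := by
        funext s
        rw [fd _ (hne s), hip s]; ring
      have hgc : Continuous (fun s : ℝ => fderiv ℝ w (‖r • e + s • e'‖ • e) e / ‖r • e + s • e'‖) := by
        apply Continuous.div
        · exact (hg1 e).continuous.comp (by fun_prop)
        · fun_prop
        · intro s; exact norm_ne_zero_iff.2 (hne s)
      have h3 : HasDerivAt (fun s : ℝ => s * (fderiv ℝ w (‖r • e + s • e'‖ • e) e / ‖r • e + s • e'‖))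
          (fderiv ℝ w (r • e) e / r) 0 := by
        rw [hasDerivAt_iff_tendsto_slope]
        have h4 := (hgc.tendsto 0).mono_left (nhdsWithin_le_nhds (s := {0}ᶜ))
        simp only [zero_smul, add_zero, norm_smul, hen, mul_one, Real.norm_eq_abs, abs_of_pos hr] at h4
        refine h4.congr' ?_
        filter_upwards [self_mem_nhdsWithin] with s hs
        have hs' : s ≠ 0 := hs
        simp [slope_def_field]
        field_simp
      rw [hf] at h1
      exact h1.unique h3
    simp only [lap, Fin.sum_univ_two] at heq
    rw [← he, ← he', h22] at heq
    linarith

lemma u_tendsto_zero {w : R2 → ℝ} (hw : IsGroundState w) {u u1 u2 : ℝ → ℝ}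
    (h : RadData w u u1 u2) : Tendsto (fun r => u r ^ 2) atTop (𝓝 0) := by
  have cu : Continuous u := continuous_iff_continuousAt.2 fun r => (h.d1 r).continuousAt
  have cu1 : Continuous u1 := continuous_iff_continuousAt.2 fun r => (h.d2 r).continuousAt
  have i1 : Integrable (fun x : R2 => (fun r => u r ^ 2) ‖x‖) := by
    refine hw.sqInt.congr (ae_of_all _ fun x => ?_)
    simp [h.wu x]
  have i2 : Integrable (fun x : R2 => (fun r => u1 r ^ 2) ‖x‖) := by
    refine hw.gradSqInt.mono' (by fun_prop) ?_
    have : ∀ᵐ x : R2, x ≠ 0 := by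
      simp [ae_iff, measure_singleton]
    filter_upwards [this] with x hx
    have hn : ‖x‖ ≠ 0 := norm_ne_zero_iff.2 hx
    have h1 := h.fd x hx x
    rw [real_inner_self_eq_norm_sq] at h1
    have h2 : fderiv ℝ w x x = ⟪gradient w x, x⟫ := by
      simp [gradient]
    have h3 : |u1 ‖x‖ * ‖x‖| ≤ ‖gradient w x‖ * ‖x‖ := by
      have : u1 ‖x‖ * ‖x‖ = ⟪gradient w x, x⟫ := by
        rw [← h2, h1]; field_simp
      rw [this]; exact abs_real_inner_le_norm _ _
    rw [abs_mul, abs_norm] at h3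
    have h4 := le_of_mul_le_mul_right h3 (by positivity)
    simp only [norm_pow, Real.norm_eq_abs]
    gcongr
  have d2 : Module.finrank ℝ R2 = 2 := by simp
  rw [integrable_fun_norm_addHaar volume (f := fun r => u r ^ 2), d2] at i1
  rw [integrable_fun_norm_addHaar volume (f := fun r => u1 r ^ 2), d2] at i2
  have i1' := i1.mono_set (Ioi_subset_Ioi (zero_le_one (α := ℝ)))
  have i2' := i2.mono_set (Ioi_subset_Ioi (zero_le_one (α := ℝ)))
  have j1 : IntegrableOn (fun r => u r ^ 2) (Ioi 1) := by
    refine Integrable.mono' i1' (by fun_prop) ?_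
    refine (ae_restrict_iff' measurableSet_Ioi).2 (ae_of_all _ fun r hr => ?_)
    have hr' : 1 < r := hr
    simp only [norm_pow, Real.norm_eq_abs, sq_abs, smul_eq_mul]
    norm_num
    nlinarith [sq_nonneg (u r)]
  have j2 : IntegrableOn (fun r => 2 * u r * u1 r) (Ioi 1) := by
    refine Integrable.mono' (i1'.add i2') (by fun_prop) ?_
    refine (ae_restrict_iff' measurableSet_Ioi).2 (ae_of_all _ fun r hr => ?_)
    have hr' : 1 < r := hr
    simp only [Real.norm_eq_abs, smul_eq_mul, Pi.add_apply]
    norm_num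
    have : 2 * |u r| * |u1 r| ≤ u r ^ 2 + u1 r ^ 2 := by
      rw [← sq_abs (u r), ← sq_abs (u1 r)]
      nlinarith [sq_nonneg (|u r| - |u1 r|)]
    nlinarith [sq_nonneg (u r), sq_nonneg (u1 r)]
  refine tendsto_zero_of_hasDerivAt_of_integrableOn_Ioi (a := 1) (f' := fun r => 2 * u r * u1 r)
    (fun r _ => ?_) j2 j1
  have := (h.d1 r).pow 2
  convert! this using 1
  ring

lemma u_decay {w : R2 → ℝ} (hw : IsGroundState w) {u u1 u2 : ℝ → ℝ}
    (h : RadData w u u1 u2) : ∃ C : ℝ, ∀ r, 0 ≤ r →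
      |u r| ≤ C * exp (-r/2) ∧ |u1 r| ≤ C * exp (-r/2) ∧ |u2 r| ≤ C * exp (-r/2) := by
  have cu : Continuous u := continuous_iff_continuousAt.2 fun r => (h.d1 r).continuousAt
  have cu1 : Continuous u1 := continuous_iff_continuousAt.2 fun r => (h.d2 r).continuousAt
  have hpos : ∀ r, 0 ≤ r → 0 < u r := by
    intro r hr
    have := h.wu (r • EuclideanSpace.single 0 1)
    rw [norm_smul] at this
    simp [abs_of_nonneg hr] at this
    rw [← this]; exact hw.pos _
  obtain ⟨R0, hR0⟩ : ∃ R0, ∀ r, R0 ≤ r → u r ^ 2 < 1 / 4 := by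
    have := (u_tendsto_zero hw h).eventually (gt_mem_nhds (show (0:ℝ) < 1/4 by norm_num))
    exact eventually_atTop.1 this
  set R1 : ℝ := max R0 1 with hR1
  have hR11 : 1 ≤ R1 := le_max_right _ _
  have hsm : ∀ r, R1 ≤ r → u r ^ 2 < 1 / 4 := fun r hr => hR0 r (le_trans (le_max_left _ _) hr)
  have hu2 : ∀ r, 0 < r → u2 r = u r - u r ^ 3 - u1 r / r := fun r hr => by
    have := h.ode r hr; linarith
  -- key: u1 + u/2 ≤ 0 beyond R1
  have dexp : ∀ (c r : ℝ), HasDerivAt (fun r : ℝ => exp (c * r)) (exp (c * r) * c) r := by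
    intro c r
    have := ((hasDerivAt_id r).const_mul c).exp
    simpa using! this
  have key : ∀ r, R1 ≤ r → u1 r + u r / 2 ≤ 0 := by
    intro r1 hr1
    by_contra hcon
    push Not at hcon
    set Z : ℝ → ℝ := fun r => r * exp (-(1/2) * r) * (u1 r + u r / 2) with hZ
    have dZ : ∀ r, HasDerivAt Z ((1 * exp (-(1/2) * r) + r * (exp (-(1/2) * r) * (-(1/2)))) *
        (u1 r + u r / 2) + r * exp (-(1/2) * r) * (u2 r + u1 r / 2)) r := by
      intro r
      exact ((hasDerivAt_id r).mul (dexp _ r)).mul ((h.d2 r).add ((h.d1 r).div_const 2))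
    have mono : MonotoneOn Z (Ici r1) := by
      apply monotoneOn_of_hasDerivWithinAt_nonneg (convex_Ici r1)
        (fun r _ => (dZ r).continuousAt.continuousWithinAt)
        (fun r _ => (dZ r).hasDerivWithinAt)
      intro r hr
      rw [interior_Ici] at hr
      have hr' : r1 < r := hr
      have hrp : 0 < r := by linarith
      have hs := hsm r (by linarith)
      have hup := hpos r hrp.le
      rw [hu2 r hrp]
      have : ((1 * exp (-(1/2) * r) + r * (exp (-(1/2) * r) * (-(1/2)))) *
        (u1 r + u r / 2) + r * exp (-(1/2) * r) * (u r - u r ^ 3 - u1 r / r + u1 r / 2))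
        = exp (-(1/2) * r) * (u r * (r * (3/4 - u r ^ 2) + 1/2)) := by
        field_simp; ring
      rw [this]
      have : 0 ≤ r * (3/4 - u r ^ 2) := mul_nonneg hrp.le (by linarith)
      positivity
    have hz1 : 0 < Z r1 := by
      have : 0 < r1 := by linarith
      simp only [hZ]; positivity
    have lower : ∀ r, r1 ≤ r → Z r1 / 2 ≤ u1 r + u r / 2 := by
      intro r hr
      have hm : Z r1 ≤ Z r := mono (self_mem_Ici) hr hr
      have hrp : 0 < r := by linarith
      have he : r * exp (-(1/2) * r) ≤ 2 := by
        have h1 : r / 2 ≤ exp (r/2) := by linarith [Real.add_one_le_exp (r/2)]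
        have h2 : exp (-(1/2) * r) * exp (r/2) = 1 := by
          rw [← Real.exp_add]; ring_nf; simp
        have h3 := Real.exp_pos (-(1/2) * r)
        nlinarith
      have hzp : 0 < Z r := lt_of_lt_of_le hz1 hm
      have hzz : 0 < u1 r + u r / 2 := by
        have h5 : 0 < r * exp (-(1/2) * r) := by positivity
        exact (pos_iff_pos_of_mul_pos hzp).1 h5
      have : Z r ≤ 2 * (u1 r + u r / 2) := by
        simp only [hZ]; gcongr
      linarith
    obtain ⟨R2, hR2⟩ : ∃ R2, ∀ r, R2 ≤ r → u r ^ 2 < (Z r1 / 2) ^ 2 := by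
      have := (u_tendsto_zero hw h).eventually (gt_mem_nhds (show (0:ℝ) < (Z r1 / 2) ^ 2 by positivity))
      exact eventually_atTop.1 this
    set R3 := max R2 r1
    have l2 : ∀ r, R3 ≤ r → Z r1 / 4 ≤ u1 r := by
      intro r hr
      have h1 := lower r (le_trans (le_max_right _ _) hr)
      have h2 := hR2 r (le_trans (le_max_left _ _) hr)
      have h3 : u r < Z r1 / 2 := lt_of_pow_lt_pow_left₀ 2 (by positivity) h2
      linarith
    have m2 : MonotoneOn (fun r => u r - Z r1 / 4 * r) (Ici R3) := by
      have dd : ∀ r, HasDerivAt (fun r => u r - Z r1 / 4 * r) (u1 r - Z r1 / 4 * 1) r := fun r =>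
        (h.d1 r).sub ((hasDerivAt_id r).const_mul _)
      apply monotoneOn_of_hasDerivWithinAt_nonneg (convex_Ici R3)
        (fun r _ => (dd r).continuousAt.continuousWithinAt)
        (fun r _ => (dd r).hasDerivWithinAt)
      intro r hr
      rw [interior_Ici] at hr
      have := l2 r (le_of_lt hr)
      linarith
    have h3 : R1 ≤ R3 := le_trans hr1 (le_max_right _ _)
    have h4 := m2 (self_mem_Ici) (show R3 + 4 / Z r1 ∈ Ici R3 from by
      have : 0 < 4 / Z r1 := by positivity
      simp only [mem_Ici]; linarith) (by
      have : 0 < 4 / Z r1 := by positivity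
      linarith)
    have h5 := hpos R3 (by linarith)
    have h7 : 0 < 4 / Z r1 := by positivity
    have h6 := hsm (R3 + 4 / Z r1) (by linarith)
    simp only at h4
    have h8 : Z r1 / 4 * (R3 + 4 / Z r1) = Z r1 / 4 * R3 + 1 := by field_simp
    nlinarith
  -- decay of u
  have anti : AntitoneOn (fun r => u r * exp ((1/2) * r)) (Ici R1) := by
    have dd : ∀ r, HasDerivAt (fun r => u r * exp ((1/2) * r))
        (u1 r * exp ((1/2) * r) + u r * (exp ((1/2) * r) * (1/2))) r := fun r =>
      (h.d1 r).mul (dexp _ r)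
    apply antitoneOn_of_hasDerivWithinAt_nonpos (convex_Ici R1)
      (fun r _ => (dd r).continuousAt.continuousWithinAt)
      (fun r _ => (dd r).hasDerivWithinAt)
    intro r hr
    rw [interior_Ici] at hr
    have := key r (le_of_lt hr)
    have : u1 r * exp ((1/2) * r) + u r * (exp ((1/2) * r) * (1/2)) =
      (u1 r + u r / 2) * exp ((1/2) * r) := by ring
    rw [this]
    exact mul_nonpos_of_nonpos_of_nonneg (by assumption) (Real.exp_pos _).le
  set A := u R1 * exp ((1/2) * R1) with hA
  have hA0 : 0 < A := by have := hpos R1 (by linarith); positivity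
  have du : ∀ r, R1 ≤ r → u r ≤ A * exp (-r/2) := by
    intro r hr
    have h1 : u r * exp ((1/2) * r) ≤ A := anti self_mem_Ici hr hr
    have h2 : exp ((1/2) * r) * exp (-r/2) = 1 := by
      rw [← Real.exp_add]; ring_nf; simp
    calc u r = (u r * exp ((1/2) * r)) * exp (-r/2) := by rw [mul_assoc, h2, mul_one]
      _ ≤ _ := by gcongr
  -- decay of u1
  have u1neg : ∀ r, R1 ≤ r → u1 r ≤ 0 := fun r hr => by
    have := key r hr
    have := hpos r (by linarith)
    linarith
  have u2pos : ∀ r, R1 ≤ r → 0 ≤ u2 r := by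
    intro r hr
    have hrp : 0 < r := by linarith
    rw [hu2 r hrp]
    have h1 := hpos r hrp.le
    have h2 := hsm r hr
    have h3 : u1 r / r ≤ 0 := div_nonpos_of_nonpos_of_nonneg (u1neg r hr) hrp.le
    nlinarith
  have u1mono : MonotoneOn u1 (Ici R1) := by
    apply monotoneOn_of_hasDerivWithinAt_nonneg (convex_Ici R1)
      (fun r _ => (h.d2 r).continuousAt.continuousWithinAt)
      (fun r _ => (h.d2 r).hasDerivWithinAt)
    intro r hr
    rw [interior_Ici] at hr
    exact u2pos r (le_of_lt hr)
  have du1 : ∀ r, R1 + 1 ≤ r → |u1 r| ≤ (A * exp (1/2)) * exp (-r/2) := by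
    intro r hr
    rw [abs_of_nonpos (u1neg r (by linarith))]
    obtain ⟨c, hc, hc'⟩ := exists_hasDerivAt_eq_slope u u1 (show r - 1 < r by linarith)
      cu.continuousOn (fun x _ => h.d1 x)
    have h1 : u1 c ≤ u1 r := u1mono (show R1 ≤ c by linarith [hc.1]) (show R1 ≤ r by linarith) hc.2.le
    have h2 := du (r - 1) (by linarith)
    have h3 := hpos r (by linarith)
    have h4 : u1 c = u r - u (r - 1) := by rw [hc']; ring
    have h5 : A * exp (-(r-1)/2) = (A * exp (1/2)) * exp (-r/2) := by
      have : -(r-1)/2 = 1/2 + -r/2 := by ring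
      rw [this, Real.exp_add, ← mul_assoc]
    linarith
  have he1 : 1 ≤ exp (1/2) := Real.one_le_exp (by norm_num)
  have du2 : ∀ r, R1 + 1 ≤ r → |u2 r| ≤ (2 * A * exp (1/2)) * exp (-r/2) := by
    intro r hr
    have hrp : 0 < r := by linarith
    have h0 := u2pos r (by linarith)
    rw [abs_of_nonneg h0, hu2 r hrp]
    have h1 := du r (by linarith)
    have h2 := du1 r hr
    have h3 := hpos r hrp.le
    have h4 : - (u1 r / r) ≤ |u1 r| := by
      calc -(u1 r / r) ≤ |u1 r / r| := neg_le_abs _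
        _ = |u1 r| / r := by rw [abs_div, abs_of_pos hrp]
        _ ≤ |u1 r| := div_le_self (abs_nonneg _) (by linarith)
    have h5 : 0 < u r ^ 3 := by positivity
    have h6 : A * exp (-r/2) ≤ (A * exp (1/2)) * exp (-r/2) := by
      gcongr; nlinarith
    nlinarith
  -- compact part
  obtain ⟨M, hM⟩ := (isCompact_Icc (a := (0:ℝ)) (b := R1 + 1)).exists_bound_of_continuousOn
    (f := fun r => |u r| + |u1 r| + |u2 r|) (by have := h.c2; fun_prop)
  have hM0 : 0 ≤ M := le_trans (norm_nonneg _) (hM 0 ⟨le_rfl, by linarith⟩)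
  refine ⟨2 * A * exp (1/2) + M * exp ((R1 + 1)/2), fun r hr => ?_⟩
  have hpe := Real.exp_pos (-r/2)
  have hpe2 := Real.exp_pos ((R1 + 1)/2)
  rcases le_total r (R1 + 1) with hle | hle
  · have h1 := hM r ⟨hr, hle⟩
    rw [Real.norm_eq_abs] at h1
    have h1 := (abs_le.1 h1).2
    have h2 : 1 ≤ exp ((R1 + 1)/2) * exp (-r/2) := by
      rw [← Real.exp_add]; exact Real.one_le_exp (by linarith)
    have h3 : M ≤ (2 * A * exp (1/2) + M * exp ((R1 + 1)/2)) * exp (-r/2) := by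
      have : M * 1 ≤ M * (exp ((R1 + 1)/2) * exp (-r/2)) := by gcongr
      have : 0 ≤ 2 * A * exp (1/2) * exp (-r/2) := by positivity
      nlinarith
    have := abs_nonneg (u r)
    have := abs_nonneg (u1 r)
    have := abs_nonneg (u2 r)
    refine ⟨?_, ?_, ?_⟩ <;> linarith
  · have a1 := du r (by linarith)
    have a2 := du1 r hle
    have a3 := du2 r hle
    have h3 := hpos r hr
    rw [abs_of_pos h3]
    have b1 : 0 ≤ M * exp ((R1 + 1)/2) * exp (-r/2) := by positivity
    have b2 : A * exp (-r/2) ≤ A * exp (1/2) * exp (-r/2) := by gcongr; nlinarith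
    have b3 : 0 ≤ A * exp (1/2) * exp (-r/2) := by positivity
    refine ⟨?_, ?_, ?_⟩ <;> nlinarith

def Iv : Set ℝ := Ioo (1/2) 2

/-- polynomially growing continuous families -/
def Pg (F : ℝ → R2 → ℝ) : Prop :=
  (∃ C : ℝ, ∃ N : ℕ, 0 ≤ C ∧ ∀ t ∈ Iv, ∀ x, |F t x| ≤ C * (1 + ‖x‖) ^ N) ∧
    ∀ t ∈ Iv, Continuous (F t)

/-- rapidly decaying continuous families -/
def Gd (F : ℝ → R2 → ℝ) : Prop :=
  (∀ k : ℕ, ∃ C : ℝ, 0 ≤ C ∧ ∀ t ∈ Iv, ∀ x, (1 + ‖x‖) ^ k * |F t x| ≤ C) ∧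
    ∀ t ∈ Iv, Continuous (F t)

lemma one_mem_Iv : (1:ℝ) ∈ Iv := by constructor <;> norm_num

lemma Iv_nhds {t : ℝ} (ht : t ∈ Iv) : Iv ∈ 𝓝 t := isOpen_Ioo.mem_nhds ht

lemma Gd.add {F G : ℝ → R2 → ℝ} (hF : Gd F) (hG : Gd G) : Gd (fun t x => F t x + G t x) := by
  refine ⟨fun k => ?_, fun t ht => (hF.2 t ht).add (hG.2 t ht)⟩
  obtain ⟨C, hC, h1⟩ := hF.1 k
  obtain ⟨D, hD, h2⟩ := hG.1 k
  refine ⟨C + D, by positivity, fun t ht x => ?_⟩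
  calc (1 + ‖x‖) ^ k * |F t x + G t x| ≤ (1 + ‖x‖) ^ k * (|F t x| + |G t x|) := by
        gcongr; exact abs_add_le _ _
    _ = (1 + ‖x‖) ^ k * |F t x| + (1 + ‖x‖) ^ k * |G t x| := by ring
    _ ≤ _ := add_le_add (h1 t ht x) (h2 t ht x)

lemma Gd.mul {F G : ℝ → R2 → ℝ} (hF : Gd F) (hG : Pg G) : Gd (fun t x => F t x * G t x) := by
  refine ⟨fun k => ?_, fun t ht => (hF.2 t ht).mul (hG.2 t ht)⟩
  obtain ⟨D, N, hD, h2⟩ := hG.1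
  obtain ⟨C, hC, h1⟩ := hF.1 (k + N)
  refine ⟨C * D, by positivity, fun t ht x => ?_⟩
  rw [abs_mul]
  calc (1 + ‖x‖) ^ k * (|F t x| * |G t x|) ≤ (1 + ‖x‖) ^ k * (|F t x| * (D * (1 + ‖x‖) ^ N)) := by
        gcongr; exact h2 t ht x
    _ = ((1 + ‖x‖) ^ (k + N) * |F t x|) * D := by ring
    _ ≤ _ := by gcongr; exact h1 t ht x

lemma Gd.pg {F : ℝ → R2 → ℝ} (hF : Gd F) : Pg F := by
  refine ⟨?_, hF.2⟩
  obtain ⟨C, hC, h1⟩ := hF.1 0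
  exact ⟨C, 0, hC, fun t ht x => by simpa using h1 t ht x⟩

lemma Pg.const (c : ℝ → ℝ) (K : ℝ) (hc : ∀ t ∈ Iv, |c t| ≤ K) : Pg (fun t _ => c t) := by
  refine ⟨⟨|K|, 0, by positivity, fun t ht x => ?_⟩, fun t _ => continuous_const⟩
  simpa using (hc t ht).trans (le_abs_self K)

lemma Pg.num (c : ℝ) : Pg (fun _ _ => c) := Pg.const (fun _ => c) |c| (fun _ _ => le_rfl)

lemma Pg.time : Pg (fun t _ => t) := Pg.const (fun t => t) 2 (fun t ht => by
  rw [abs_of_pos (by linarith [ht.1])]; exact ht.2.le)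

lemma Pg.add {F G : ℝ → R2 → ℝ} (hF : Pg F) (hG : Pg G) : Pg (fun t x => F t x + G t x) := by
  refine ⟨?_, fun t ht => (hF.2 t ht).add (hG.2 t ht)⟩
  obtain ⟨C, M, hC, h1⟩ := hF.1
  obtain ⟨D, N, hD, h2⟩ := hG.1
  refine ⟨C + D, M + N, by positivity, fun t ht x => ?_⟩
  have hx : 1 ≤ 1 + ‖x‖ := by linarith [norm_nonneg x]
  calc |F t x + G t x| ≤ |F t x| + |G t x| := abs_add_le _ _
    _ ≤ C * (1 + ‖x‖) ^ M + D * (1 + ‖x‖) ^ N := add_le_add (h1 t ht x) (h2 t ht x)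
    _ ≤ C * (1 + ‖x‖) ^ (M + N) + D * (1 + ‖x‖) ^ (M + N) := by
        gcongr <;> first | exact hx | omega
    _ = _ := by ring

lemma Pg.mul {F G : ℝ → R2 → ℝ} (hF : Pg F) (hG : Pg G) : Pg (fun t x => F t x * G t x) := by
  refine ⟨?_, fun t ht => (hF.2 t ht).mul (hG.2 t ht)⟩
  obtain ⟨C, M, hC, h1⟩ := hF.1
  obtain ⟨D, N, hD, h2⟩ := hG.1
  refine ⟨C * D, M + N, by positivity, fun t ht x => ?_⟩
  rw [abs_mul]
  calc |F t x| * |G t x| ≤ (C * (1 + ‖x‖) ^ M) * (D * (1 + ‖x‖) ^ N) := by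
        gcongr
        · exact h1 t ht x
        · exact h2 t ht x
    _ = _ := by ring

lemma Pg.norm : Pg (fun _ x => ‖x‖) :=
  ⟨⟨1, 1, zero_le_one, fun t _ x => by simp⟩, fun _ _ => continuous_norm⟩

lemma Pg.of_bdd {f : R2 → ℝ} (hf : Continuous f) (hb : BddFun f) : Pg (fun _ x => f x) := by
  obtain ⟨M, hM⟩ := hb
  refine ⟨⟨|M|, 0, by positivity, fun t _ x => ?_⟩, fun _ _ => hf⟩
  simpa using (hM x).trans (le_abs_self M)

lemma Gd.congr {F G : ℝ → R2 → ℝ} (hF : Gd F) (h : ∀ t x, F t x = G t x) : Gd G := by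
  have : F = G := by funext t x; exact h t x
  rwa [← this]

lemma Pg.congr {F G : ℝ → R2 → ℝ} (hF : Pg F) (h : ∀ t x, F t x = G t x) : Pg G := by
  have : F = G := by funext t x; exact h t x
  rwa [← this]

lemma int_bound : Integrable (fun x : R2 => ((1 + ‖x‖) ^ 3)⁻¹) := by
  have := integrable_one_add_norm (E := R2) (μ := volume) (r := 3) (by simp; norm_num)
  refine this.congr (ae_of_all _ fun x => ?_)
  have hx : 0 ≤ 1 + ‖x‖ := by positivity
  simp only
  rw [Real.rpow_neg hx]
  norm_cast

lemma Gd.bound {F : ℝ → R2 → ℝ} (hF : Gd F) : ∃ C : ℝ, 0 ≤ C ∧ ∀ t ∈ Iv, ∀ x,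
    |F t x| ≤ C * ((1 + ‖x‖) ^ 3)⁻¹ := by
  obtain ⟨C, hC, h⟩ := hF.1 3
  refine ⟨C, hC, fun t ht x => ?_⟩
  have hx : 0 < (1 + ‖x‖) ^ 3 := by positivity
  rw [← div_eq_mul_inv, le_div_iff₀ hx, mul_comm]
  exact h t ht x

lemma Gd.integrable {F : ℝ → R2 → ℝ} (hF : Gd F) {t : ℝ} (ht : t ∈ Iv) : Integrable (F t) := by
  obtain ⟨C, hC, h⟩ := hF.bound
  exact (int_bound.const_mul C).mono' (hF.2 t ht).aestronglyMeasurable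
    (ae_of_all _ fun x => h t ht x)

lemma Gd.hasDerivAt {F F' : ℝ → R2 → ℝ} (hF : Gd F) (hF' : Gd F')
    (hd : ∀ x, ∀ t ∈ Iv, HasDerivAt (fun s => F s x) (F' t x) t) {t : ℝ} (ht : t ∈ Iv) :
    HasDerivAt (fun s => ∫ x, F s x) (∫ x, F' t x) t := by
  obtain ⟨C, hC, h⟩ := hF'.bound
  refine (hasDerivAt_integral_of_dominated_loc_of_deriv_le (Iv_nhds ht) ?_ (hF.integrable ht)
    (hF'.2 t ht).aestronglyMeasurable (bound := fun x => C * ((1 + ‖x‖) ^ 3)⁻¹) ?_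
    (int_bound.const_mul C) ?_).2
  · filter_upwards [Iv_nhds ht] with s hs
    exact (hF.2 s hs).aestronglyMeasurable
  · exact ae_of_all _ fun x s hs => h s hs x
  · exact ae_of_all _ fun x s hs => hd x s hs

lemma Gd.radial {g : ℝ → ℝ} (hg : Continuous g) {C : ℝ}
    (hC : ∀ r, 0 ≤ r → |g r| ≤ C * exp (-r/2)) : Gd (fun t x => g (t * ‖x‖)) := by
  have hC0 : 0 ≤ C := by
    have := (abs_nonneg _).trans (hC 0 le_rfl)
    simpa using this
  refine ⟨fun k => ⟨2 ^ k * (C * (2 ^ k * k.factorial * exp (1/2))), by positivity, fun t ht x => ?_⟩,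
    fun t _ => by fun_prop⟩
  have ht1 : 1/2 < t := ht.1
  have hn := norm_nonneg x
  set r := t * ‖x‖ with hr
  have hr0 : 0 ≤ r := by positivity
  have h1 : (1 + ‖x‖) ^ k ≤ 2 ^ k * (1 + r) ^ k := by
    rw [← mul_pow]
    gcongr
    nlinarith
  have h2 : (1 + r) ^ k * exp (-r/2) ≤ 2 ^ k * k.factorial * exp (1/2) := by
    have h3 := Real.pow_div_factorial_le_exp (x := (1 + r)/2) (by positivity) k
    have h4 : exp ((1 + r)/2) * exp (-r/2) = exp (1/2) := by
      rw [← Real.exp_add]; ring_nf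
    rw [div_le_iff₀ (by positivity), div_pow, div_le_iff₀ (by positivity)] at h3
    calc (1 + r) ^ k * exp (-r/2) ≤ (exp ((1 + r)/2) * k.factorial * 2 ^ k) * exp (-r/2) := by gcongr
      _ = (exp ((1 + r)/2) * exp (-r/2)) * k.factorial * 2 ^ k := by ring
      _ = _ := by rw [h4]; ring
  calc (1 + ‖x‖) ^ k * |g r| ≤ (2 ^ k * (1 + r) ^ k) * (C * exp (-r/2)) := by
        gcongr; exact hC r hr0
    _ = 2 ^ k * (C * ((1 + r) ^ k * exp (-r/2))) := by ring
    _ ≤ _ := by gcongr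

def Vf (u : ℝ → ℝ) (t : ℝ) (x : R2) : ℝ := t * u (t * ‖x‖)
def V1f (u u1 : ℝ → ℝ) (t : ℝ) (x : R2) : ℝ := u (t * ‖x‖) + t * (‖x‖ * u1 (t * ‖x‖))
def V2f (u1 u2 : ℝ → ℝ) (t : ℝ) (x : R2) : ℝ :=
  2 * (‖x‖ * u1 (t * ‖x‖)) + t * (‖x‖ ^ 2 * u2 (t * ‖x‖))

structure VData (w : R2 → ℝ) (V V1 V2 : ℝ → R2 → ℝ) : Prop where
  g0 : Gd V
  g1 : Gd V1
  g2 : Gd V2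
  d1 : ∀ x, ∀ t ∈ Iv, HasDerivAt (fun s => V s x) (V1 t x) t
  d2 : ∀ x, ∀ t ∈ Iv, HasDerivAt (fun s => V1 s x) (V2 t x) t
  eq : ∀ t ∈ Iv, ∀ x, V t x = t * w (t • x)
  at1 : ∀ x, V1 1 x = w x + xgrad w x
  gw : ∀ i : Fin 2, Gd (fun t x => fderiv ℝ w (t • x) (EuclideanSpace.single i 1))

lemma vdata_exists (w : R2 → ℝ) (hw : IsGroundState w) : ∃ V V1 V2, VData w V V1 V2 := by
  obtain ⟨u, u1, u2, h⟩ := radData_exists w hw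
  obtain ⟨C, hC⟩ := u_decay hw h
  have cu : Continuous u := continuous_iff_continuousAt.2 fun r => (h.d1 r).continuousAt
  have cu1 : Continuous u1 := continuous_iff_continuousAt.2 fun r => (h.d2 r).continuousAt
  have r0 := Gd.radial cu (fun r hr => (hC r hr).1)
  have r1 := Gd.radial cu1 (fun r hr => (hC r hr).2.1)
  have r2 := Gd.radial h.c2 (fun r hr => (hC r hr).2.2)
  have hl : ∀ (x : R2) t, HasDerivAt (fun s : ℝ => s * ‖x‖) ‖x‖ t := fun x t => by
    simpa using (hasDerivAt_id t).mul_const ‖x‖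
  have cu' : ∀ (x : R2) t, HasDerivAt (fun s : ℝ => u (s * ‖x‖)) (u1 (t * ‖x‖) * ‖x‖) t :=
    fun x t => (h.d1 _).comp t (hl x t)
  have cu1' : ∀ (x : R2) t, HasDerivAt (fun s : ℝ => u1 (s * ‖x‖)) (u2 (t * ‖x‖) * ‖x‖) t :=
    fun x t => (h.d2 _).comp t (hl x t)
  refine ⟨Vf u, V1f u u1, V2f u1 u2, ?_, ?_, ?_, ?_, ?_, ?_, ?_, ?_⟩
  · exact (r0.mul Pg.time).congr fun t x => by simp [Vf, mul_comm]
  · exact (r0.add (r1.mul (Pg.time.mul Pg.norm))).congr fun t x => by simp only [V1f]; ring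
  · exact ((r1.mul ((Pg.num 2).mul Pg.norm)).add
      (r2.mul (Pg.time.mul (Pg.norm.mul Pg.norm)))).congr fun t x => by simp only [V2f]; ring
  · intro x t _
    have := (hasDerivAt_id t).mul (cu' x t)
    convert! this using 1
    simp only [V1f, id]; ring
  · intro x t _
    have := (cu' x t).add ((hasDerivAt_id t).mul ((cu1' x t).const_mul ‖x‖))
    convert! this using 1
    simp only [V2f, id]; ring
  · intro t ht x
    have : 0 < t := by linarith [ht.1]
    rw [h.wu (t • x), norm_smul, Real.norm_eq_abs, abs_of_pos this]; rfl
  · intro x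
    simp only [V1f, one_mul]
    rw [h.wu x]
    congr 1
    have h2 : xgrad w x = fderiv ℝ w x x := by
      rw [xgrad, real_inner_comm]
      simp [gradient]
    rw [h2]
    by_cases hx : x = 0
    · simp [hx]
    · rw [h.fd x hx x, real_inner_self_eq_norm_sq]
      have : ‖x‖ ≠ 0 := norm_ne_zero_iff.2 hx
      field_simp
  · intro i
    have hc : Continuous (fun x => fderiv ℝ w x (EuclideanSpace.single i 1)) :=
      (hw.smooth.continuous_fderiv (by norm_num)).clm_apply continuous_const
    refine ⟨fun k => ?_, fun t _ => hc.comp (by fun_prop)⟩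
    obtain ⟨D, hD, hb⟩ := r1.1 k
    have gen : ∀ t ∈ Iv, ∀ x : R2, x ≠ 0 → (1 + ‖x‖) ^ k *
        |fderiv ℝ w (t • x) (EuclideanSpace.single i 1)| ≤ D := by
      intro t ht x hx
      have ht0 : 0 < t := by linarith [ht.1]
      have hne : t • x ≠ 0 := smul_ne_zero ht0.ne' hx
      have hn : 0 < ‖t • x‖ := norm_pos_iff.2 hne
      refine le_trans ?_ (hb t ht x)
      refine mul_le_mul_of_nonneg_left ?_ (by positivity)
      rw [h.fd _ hne, abs_mul, norm_smul, Real.norm_eq_abs, abs_of_pos ht0]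
      refine mul_le_of_le_one_right (abs_nonneg _) ?_
      have e : t * ‖x‖ = ‖t • x‖ := by rw [norm_smul, Real.norm_eq_abs, abs_of_pos ht0]
      rw [e, abs_div, abs_norm, div_le_one hn]
      refine (abs_real_inner_le_norm _ _).trans ?_
      simp
    refine ⟨D, hD, fun t ht x => ?_⟩
    by_cases hx : x = 0
    · have hcl : IsClosed {x : R2 | (1 + ‖x‖) ^ k *
        |fderiv ℝ w (t • x) (EuclideanSpace.single i 1)| ≤ D} := by
        refine isClosed_le ?_ continuous_const
        have := hc.comp (continuous_const_smul t : Continuous fun x : R2 => t • x)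
        simp only [Function.comp_def] at this
        fun_prop
      have hd : Dense ({0}ᶜ : Set R2) := dense_compl_singleton 0
      have hs : closure ({0}ᶜ : Set R2) ⊆ _ := hcl.closure_subset_iff.2 (fun y hy => gen t ht y hy)
      exact hs (hd x)
    · exact gen t ht x hx

lemma cd_fd {f : R2 → ℝ} (hf : ContDiff ℝ 2 f) (v : R2) : ContDiff ℝ 1 (fun y => fderiv ℝ f y v) :=
  (hf.fderiv_right (m := 1) (by norm_num)).clm_apply contDiff_const

lemma c_fd {f : R2 → ℝ} (hf : ContDiff ℝ 1 f) (v : R2) : Continuous (fun y => fderiv ℝ f y v) :=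
  (hf.continuous_fderiv (by norm_num)).clm_apply continuous_const

lemma lap_cont {f : R2 → ℝ} (hf : ContDiff ℝ 2 f) : Continuous (lap f) := by
  unfold lap
  exact continuous_finsetSum _ fun i _ => c_fd (cd_fd hf _) _

lemma green_dir {φ f : R2 → ℝ} (hφ : ContDiff ℝ 2 φ) (hf : ContDiff ℝ 2 f)
    (hs : HasCompactSupport φ) (e : R2) :
    ∫ x, φ x * fderiv ℝ (fun y => fderiv ℝ f y e) x e =
      ∫ x, fderiv ℝ (fun y => fderiv ℝ φ y e) x e * f x := by
  have hs1 : HasCompactSupport (fun y => fderiv ℝ φ y e) := hs.fderiv_apply ℝ e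
  have hs2 : HasCompactSupport (fun y => fderiv ℝ (fun y => fderiv ℝ φ y e) y e) :=
    hs1.fderiv_apply ℝ e
  have cφ := hφ.continuous
  have cf := hf.continuous
  have cφ1 := (cd_fd hφ e).continuous
  have cf1 := (cd_fd hf e).continuous
  have cφ2 := c_fd (cd_fd hφ e) e
  have cf2 := c_fd (cd_fd hf e) e
  rw [integral_mul_fderiv_eq_neg_fderiv_mul_of_integrable]
  · rw [integral_mul_fderiv_eq_neg_fderiv_mul_of_integrable]
    · simp
    · exact (cφ2.mul cf).integrable_of_hasCompactSupport hs2.mul_right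
    · exact (cφ1.mul cf1).integrable_of_hasCompactSupport hs1.mul_right
    · exact (cφ1.mul cf).integrable_of_hasCompactSupport hs1.mul_right
    · exact fun x _ => (cd_fd hφ e).differentiable (by norm_num) x
    · exact fun x _ => hf.differentiable (by norm_num) x
  · exact (cφ1.mul cf1).integrable_of_hasCompactSupport hs1.mul_right
  · exact (cφ.mul cf2).integrable_of_hasCompactSupport hs.mul_right
  · exact (cφ.mul cf1).integrable_of_hasCompactSupport hs.mul_right
  · exact fun x _ => hφ.differentiable (by norm_num) x
  · exact fun x _ => (cd_fd hf e).differentiable (by norm_num) x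

lemma green_cpt {φ f : R2 → ℝ} (hφ : ContDiff ℝ 2 φ) (hf : ContDiff ℝ 2 f)
    (hs : HasCompactSupport φ) : ∫ x, φ x * lap f x = ∫ x, lap φ x * f x := by
  simp only [lap, Finset.mul_sum, Finset.sum_mul]
  rw [integral_finsetSum, integral_finsetSum]
  · exact Finset.sum_congr rfl fun i _ => green_dir hφ hf hs _
  · intro i _
    exact ((c_fd (cd_fd hφ _) _).mul hf.continuous).integrable_of_hasCompactSupport
      (((hs.fderiv_apply ℝ _).fderiv_apply ℝ _).mul_right)
  · intro i _
    exact (hφ.continuous.mul (c_fd (cd_fd hf _) _)).integrable_of_hasCompactSupport hs.mul_right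

lemma fderiv_smul_comp {f : R2 → ℝ} (hf : Differentiable ℝ f) (s : ℝ) (x v : R2) :
    fderiv ℝ (fun y => f (s • y)) x v = s * fderiv ℝ f (s • x) v := by
  have h1 : HasFDerivAt (fun y : R2 => s • y) (s • ContinuousLinearMap.id ℝ R2) x :=
    (hasFDerivAt_id x).const_smul s
  have h2 : HasFDerivAt (fun y => f (s • y)) _ x := (hf (s • x)).hasFDerivAt.comp x h1
  rw [h2.fderiv]
  simp

lemma lap_smul_comp {f : R2 → ℝ} (hf : ContDiff ℝ 2 f) (s : ℝ) (x : R2) :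
    lap (fun y => f (s • y)) x = s ^ 2 * lap f (s • x) := by
  unfold lap
  rw [Finset.mul_sum]
  refine Finset.sum_congr rfl fun i _ => ?_
  set e : R2 := EuclideanSpace.single i 1
  have h1 : (fun y => fderiv ℝ (fun y => f (s • y)) y e) = fun y => s * fderiv ℝ f (s • y) e := by
    funext y; exact fderiv_smul_comp (hf.differentiable (by norm_num)) s y e
  rw [h1]
  have hd : Differentiable ℝ (fun y => fderiv ℝ f y e) := (cd_fd hf e).differentiable (by norm_num)
  have hd2 : Differentiable ℝ (fun y => fderiv ℝ f (s • y) e) :=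
    hd.comp (differentiable_id.const_smul s)
  rw [fderiv_const_mul (hd2 x)]
  have := fderiv_smul_comp hd s x e
  simp only [smul_apply, smul_eq_mul]
  rw [this]; ring

lemma lap_const_mul {f : R2 → ℝ} (hf : ContDiff ℝ 2 f) (c : ℝ) (x : R2) :
    lap (fun y => c * f y) x = c * lap f x := by
  unfold lap
  rw [Finset.mul_sum]
  refine Finset.sum_congr rfl fun i _ => ?_
  set e : R2 := EuclideanSpace.single i 1
  have h1 : (fun y => fderiv ℝ (fun y => c * f y) y e) = fun y => c * fderiv ℝ f y e := by
    funext y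
    rw [fderiv_const_mul (hf.differentiable (by norm_num) y)]; simp
  rw [h1, fderiv_const_mul ((cd_fd hf e).differentiable (by norm_num) x)]
  simp

lemma lap_mul {f g : R2 → ℝ} (hf : ContDiff ℝ 2 f) (hg : ContDiff ℝ 2 g) (x : R2) :
    lap (fun y => f y * g y) x = f x * lap g x + 2 * (∑ i : Fin 2,
      fderiv ℝ f x (EuclideanSpace.single i 1) * fderiv ℝ g x (EuclideanSpace.single i 1))
      + lap f x * g x := by
  unfold lap
  rw [Finset.mul_sum, Finset.mul_sum, Finset.sum_mul, ← Finset.sum_add_distrib,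
    ← Finset.sum_add_distrib]
  refine Finset.sum_congr rfl fun i _ => ?_
  set e : R2 := EuclideanSpace.single i 1
  have df := hf.differentiable (by norm_num)
  have dg := hg.differentiable (by norm_num)
  have df1 := (cd_fd hf e).differentiable (by norm_num)
  have dg1 := (cd_fd hg e).differentiable (by norm_num)
  have h1 : (fun y => fderiv ℝ (fun y => f y * g y) y e) =
      fun y => f y * fderiv ℝ g y e + g y * fderiv ℝ f y e := by
    funext y
    rw [fderiv_fun_mul (df y) (dg y)]; simp
  rw [h1, fderiv_fun_add ((df x).fun_mul (dg1 x)) ((dg x).fun_mul (df1 x)),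
    fderiv_fun_mul (df x) (dg1 x), fderiv_fun_mul (dg x) (df1 x)]
  simp
  ring

lemma green {v f : R2 → ℝ} (hv : ContDiff ℝ 2 v) (hf : ContDiff ℝ 2 f) (hb : BddFun f)
    (i0 : Integrable v)
    (i1 : ∀ i : Fin 2, Integrable fun x => fderiv ℝ v x (EuclideanSpace.single i 1))
    (i2 : Integrable (lap v)) (i3 : Integrable fun x => v x * lap f x) :
    ∫ x, v x * lap f x = ∫ x, lap v x * f x := by
  obtain ⟨M, hM⟩ := hb
  let χ : ContDiffBump (0 : R2) := ⟨1, 2, by norm_num, by norm_num⟩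
  have hχ : ContDiff ℝ 2 (χ : R2 → ℝ) := χ.contDiff
  have hχs : HasCompactSupport (χ : R2 → ℝ) := χ.hasCompactSupport
  have cχ1 : ∀ i : Fin 2, Continuous (fun y => fderiv ℝ (χ : R2 → ℝ) y (EuclideanSpace.single i 1)) :=
    fun i => (cd_fd hχ _).continuous
  have cχ2 := lap_cont hχ
  have hK1 : ∀ i : Fin 2, ∃ K, ∀ y, ‖fderiv ℝ (χ : R2 → ℝ) y (EuclideanSpace.single i 1)‖ ≤ K :=
    fun i => (hχs.fderiv_apply ℝ _).exists_bound_of_continuous (cχ1 i)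
  have hK2 : ∃ K, ∀ y, ‖lap (χ : R2 → ℝ) y‖ ≤ K := by
    refine HasCompactSupport.exists_bound_of_continuous ?_ cχ2
    have : HasCompactSupport (fun x => fderiv ℝ (fun y => fderiv ℝ (χ : R2 → ℝ) y (EuclideanSpace.single (0 : Fin 2) 1)) x
        (EuclideanSpace.single (0 : Fin 2) 1) + fderiv ℝ (fun y => fderiv ℝ (χ : R2 → ℝ) y (EuclideanSpace.single (1 : Fin 2) 1)) x
        (EuclideanSpace.single (1 : Fin 2) 1)) :=
      ((hχs.fderiv_apply ℝ _).fderiv_apply ℝ _).add ((hχs.fderiv_apply ℝ _).fderiv_apply ℝ _)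
    convert! this using 1
    funext x; exact Fin.sum_univ_two _
  choose K1 hK1 using hK1
  obtain ⟨K2, hK2⟩ := hK2
  have hM0 : 0 ≤ M := (abs_nonneg _).trans (hM 0)
  have hs0 := tendsto_one_div_add_atTop_nhds_zero_nat (𝕜 := ℝ)
  set s : ℕ → ℝ := fun n => 1 / ((n:ℝ) + 1) with hs
  have hspos : ∀ n, 0 < s n := fun n => by simp only [hs]; positivity
  have hs1 : ∀ n, s n ≤ 1 := fun n => by
    simp only [hs]; rw [div_le_one (by positivity)]; linarith [n.cast_nonneg (α := ℝ)]
  have cs : ∀ n, ContDiff ℝ 2 (fun x => χ (s n • x)) := fun n => hχ.comp (contDiff_const_smul (s n))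
  have key : ∀ n, ∫ x, χ (s n • x) * (v x * lap f x) =
      ∫ x, (χ (s n • x) * lap v x + 2 * (∑ i : Fin 2,
        (s n * fderiv ℝ (χ : R2 → ℝ) (s n • x) (EuclideanSpace.single i 1)) *
          fderiv ℝ v x (EuclideanSpace.single i 1))
        + (s n ^ 2 * lap (χ : R2 → ℝ) (s n • x)) * v x) * f x := by
    intro n
    have hcs : HasCompactSupport (fun x => χ (s n • x) * v x) :=
      (hχs.comp_smul (hspos n).ne').mul_right
    have := green_cpt ((cs n).mul hv) hf hcs
    simp only [← mul_assoc]
    rw [this]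
    congr 1
    funext x
    rw [lap_mul (cs n) hv, lap_smul_comp hχ]
    simp only [fderiv_smul_comp (hχ.differentiable (by norm_num))]
  have lim : ∀ x : R2, Tendsto (fun n => s n • x) atTop (𝓝 0) := fun x => by
    simpa using hs0.smul_const x
  have limχ : ∀ x : R2, Tendsto (fun n => χ (s n • x)) atTop (𝓝 1) := fun x => by
    have h1 := (χ.continuous.tendsto 0).comp (lim x)
    have : χ (0 : R2) = 1 := χ.one_of_mem_closedBall (by simp [χ.rIn_pos.le])
    rw [this] at h1; exact h1
  have t1 : Tendsto (fun n => ∫ x, χ (s n • x) * (v x * lap f x)) atTop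
      (𝓝 (∫ x, v x * lap f x)) := by
    refine tendsto_integral_of_dominated_convergence (fun x => ‖v x * lap f x‖) ?_ i3.norm ?_ ?_
    · intro n
      exact ((cs n).continuous.mul (hv.continuous.mul (lap_cont hf))).aestronglyMeasurable
    · intro n
      refine ae_of_all _ fun x => ?_
      rw [norm_mul]
      refine mul_le_of_le_one_left (norm_nonneg _) ?_
      rw [Real.norm_eq_abs, abs_of_nonneg χ.nonneg]; exact χ.le_one
    · refine ae_of_all _ fun x => ?_
      simpa using (limχ x).mul_const (v x * lap f x)
  have t2 : Tendsto (fun n => ∫ x, (χ (s n • x) * lap v x + 2 * (∑ i : Fin 2,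
        (s n * fderiv ℝ (χ : R2 → ℝ) (s n • x) (EuclideanSpace.single i 1)) *
          fderiv ℝ v x (EuclideanSpace.single i 1))
        + (s n ^ 2 * lap (χ : R2 → ℝ) (s n • x)) * v x) * f x) atTop
      (𝓝 (∫ x, lap v x * f x)) := by
    refine tendsto_integral_of_dominated_convergence (fun x => (‖lap v x‖ + 2 * (∑ i : Fin 2,
      K1 i * ‖fderiv ℝ v x (EuclideanSpace.single i 1)‖) + K2 * ‖v x‖) * M) ?_ ?_ ?_ ?_
    · intro n
      refine Continuous.aestronglyMeasurable ?_
      have a1 := (cs n).continuous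
      have a2 := lap_cont hv
      have a3 : Continuous (fun x : R2 => lap (χ : R2 → ℝ) (s n • x)) := cχ2.comp (continuous_const_smul (s n))
      have a4 : ∀ i : Fin 2, Continuous (fun x : R2 => fderiv ℝ (χ : R2 → ℝ) (s n • x) (EuclideanSpace.single i 1)) :=
        fun i => (cχ1 i).comp (continuous_const_smul (s n))
      have a5 : ∀ i : Fin 2, Continuous (fun x : R2 => fderiv ℝ v x (EuclideanSpace.single i 1)) :=
        fun i => (cd_fd hv _).continuous
      have a6 := hf.continuous
      have a7 := hv.continuous
      fun_prop
    · refine Integrable.mul_const ?_ _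
      refine (i2.norm.add (Integrable.const_mul ?_ _)).add (i0.norm.const_mul _)
      exact integrable_finsetSum _ fun i _ => (i1 i).norm.const_mul _
    · intro n
      refine ae_of_all _ fun x => ?_
      rw [norm_mul]
      have hsn := hspos n
      have hsn1 := hs1 n
      have b1 : ‖χ (s n • x) * lap v x‖ ≤ ‖lap v x‖ := by
        rw [norm_mul]
        refine mul_le_of_le_one_left (norm_nonneg _) ?_
        rw [Real.norm_eq_abs, abs_of_nonneg χ.nonneg]; exact χ.le_one
      have b2 : ∀ i : Fin 2, ‖(s n * fderiv ℝ (χ : R2 → ℝ) (s n • x) (EuclideanSpace.single i 1)) *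
          fderiv ℝ v x (EuclideanSpace.single i 1)‖ ≤ K1 i * ‖fderiv ℝ v x (EuclideanSpace.single i 1)‖ := by
        intro i
        rw [norm_mul, norm_mul]
        refine mul_le_mul_of_nonneg_right ?_ (norm_nonneg _)
        rw [Real.norm_eq_abs (s n), abs_of_pos hsn]
        exact (mul_le_of_le_one_left (norm_nonneg _) hsn1).trans (hK1 i _)
      have b3 : ‖(s n ^ 2 * lap (χ : R2 → ℝ) (s n • x)) * v x‖ ≤ K2 * ‖v x‖ := by
        rw [norm_mul, norm_mul]
        refine mul_le_mul_of_nonneg_right ?_ (norm_nonneg _)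
        rw [Real.norm_eq_abs (s n ^ 2), abs_of_pos (by positivity)]
        exact (mul_le_of_le_one_left (norm_nonneg _) (pow_le_one₀ hsn.le hsn1)).trans (hK2 _)
      refine mul_le_mul ?_ (hM x) (norm_nonneg _) ?_
      · refine (norm_add₃_le).trans ?_
        refine add_le_add (add_le_add b1 ?_) b3
        rw [norm_mul]
        simp only [Real.norm_ofNat]
        gcongr
        exact (norm_sum_le _ _).trans (Finset.sum_le_sum fun i _ => b2 i)
      · have c1 : 0 ≤ K2 := (norm_nonneg _).trans (hK2 0)
        have c2 : ∀ i, 0 ≤ K1 i := fun i => (norm_nonneg _).trans (hK1 i 0)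
        have : 0 ≤ ∑ i : Fin 2, K1 i * ‖fderiv ℝ v x (EuclideanSpace.single i 1)‖ :=
          Finset.sum_nonneg fun i _ => mul_nonneg (c2 i) (norm_nonneg _)
        positivity
    · refine ae_of_all _ fun x => ?_
      refine Tendsto.mul_const _ ?_
      have l1 : Tendsto (fun n => χ (s n • x) * lap v x) atTop (𝓝 (lap v x)) := by
        simpa using (limχ x).mul_const (lap v x)
      have l2 : ∀ i : Fin 2, Tendsto (fun n => (s n * fderiv ℝ (χ : R2 → ℝ) (s n • x) (EuclideanSpace.single i 1)) *
          fderiv ℝ v x (EuclideanSpace.single i 1)) atTop (𝓝 0) := by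
        intro i
        have := (hs0.mul (((cχ1 i).tendsto 0).comp (lim x))).mul_const
          (fderiv ℝ v x (EuclideanSpace.single i 1))
        simpa using! this
      have l3 : Tendsto (fun n => (s n ^ 2 * lap (χ : R2 → ℝ) (s n • x)) * v x) atTop (𝓝 0) := by
        have := ((hs0.pow 2).mul ((cχ2.tendsto 0).comp (lim x))).mul_const (v x)
        simpa using! this
      have l4 := (l1.add ((tendsto_finsetSum Finset.univ fun i _ => l2 i).const_mul 2)).add l3
      simpa using! l4
  refine tendsto_nhds_unique t1 ?_
  simp only [key]
  exact t2

section partfive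
lemma Gd.at1 {F : ℝ → R2 → ℝ} (hF : Gd F) : Gd (fun _ x => F 1 x) := by
  refine ⟨fun k => ?_, fun t _ => hF.2 1 one_mem_Iv⟩
  obtain ⟨C, hC, h⟩ := hF.1 k
  exact ⟨C, hC, fun t _ x => h 1 one_mem_Iv x⟩

lemma Pg.at1 {F : ℝ → R2 → ℝ} (hF : Pg F) : Pg (fun _ x => F 1 x) := by
  obtain ⟨C, N, hC, h⟩ := hF.1
  exact ⟨⟨C, N, hC, fun t _ x => h 1 one_mem_Iv x⟩, fun t _ => hF.2 1 one_mem_Iv⟩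

lemma homog_growth {E : Type*} [NormedAddCommGroup E] [NormedSpace ℝ E] {g : R2 → E}
    (hg : Continuous g) {q : ℝ} (hh : ∀ t : ℝ, 0 < t → ∀ x, g (t • x) = t ^ q • g x) :
    ∃ C : ℝ, ∃ N : ℕ, 0 ≤ C ∧ ∀ x, ‖g x‖ ≤ C * (1 + ‖x‖) ^ N := by
  obtain ⟨C, hC⟩ := (isCompact_closedBall (0 : R2) 1).exists_bound_of_continuousOn hg.continuousOn
  have hC0 : 0 ≤ C := (norm_nonneg _).trans (hC 0 (by simp))
  obtain ⟨N, hN⟩ := exists_nat_ge q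
  refine ⟨C, N, hC0, fun x => ?_⟩
  have hx0 := norm_nonneg x
  rcases le_total ‖x‖ 1 with h1 | h1
  · refine (hC x (by simpa using h1)).trans ?_
    exact le_mul_of_one_le_right hC0 (one_le_pow₀ (by linarith))
  · have hp : 0 < ‖x‖ := by linarith
    have e : x = ‖x‖ • (‖x‖⁻¹ • x) := by rw [smul_smul, mul_inv_cancel₀ hp.ne', one_smul]
    have hb : ‖g (‖x‖⁻¹ • x)‖ ≤ C := hC _ (by
      simp [norm_smul, hp.ne'])
    rw [e, hh _ hp, norm_smul, ← e, Real.norm_eq_abs, abs_of_nonneg (by positivity), mul_comm]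
    have : ‖x‖ ^ q ≤ (1 + ‖x‖) ^ N := by
      calc ‖x‖ ^ q ≤ ‖x‖ ^ (N : ℝ) := Real.rpow_le_rpow_of_exponent_le h1 hN
        _ = ‖x‖ ^ N := Real.rpow_natCast _ _
        _ ≤ _ := by gcongr; linarith
    gcongr

lemma homog_fderiv {h : R2 → ℝ} {p : ℝ} (hd : Differentiable ℝ h) (hh : Homog h p) :
    ∀ t : ℝ, 0 < t → ∀ x, fderiv ℝ h (t • x) = t ^ (p - 1) • fderiv ℝ h x := by
  intro t ht x
  ext v
  have h1 := fderiv_smul_comp hd t x v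
  have h2 : (fun y => h (t • y)) = fun y => t ^ p * h y := by funext y; exact hh t ht y
  rw [h2, fderiv_const_mul (hd x)] at h1
  simp only [smul_apply, smul_eq_mul] at h1 ⊢
  rw [Real.rpow_sub_one ht.ne']
  field_simp
  linarith

lemma euler {h : R2 → ℝ} {p : ℝ} (hd : Differentiable ℝ h) (hh : Homog h p) (x : R2) :
    fderiv ℝ h x x = p * h x := by
  have h0 : HasDerivAt (fun t : ℝ => t • x) x 1 := by
    simpa using (hasDerivAt_id (1:ℝ)).smul_const x
  have h1 : HasDerivAt (fun t : ℝ => h (t • x)) (fderiv ℝ h ((1:ℝ) • x) x) 1 :=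
    (hd ((1:ℝ) • x)).hasFDerivAt.comp_hasDerivAt (1:ℝ) h0
  have h2 : HasDerivAt (fun t : ℝ => t ^ p * h x) (p * 1 ^ (p - 1) * h x) 1 :=
    (Real.hasDerivAt_rpow_const (Or.inl one_ne_zero)).mul_const _
  have h3 : (fun t : ℝ => h (t • x)) =ᶠ[𝓝 1] fun t : ℝ => t ^ p * h x := by
    filter_upwards [lt_mem_nhds (zero_lt_one' ℝ)] with t ht
    exact hh t ht x
  have := h1.unique (h2.congr_of_eventuallyEq h3)
  simpa using this

lemma growth_shift {E : Type*} [NormedAddCommGroup E] {g : R2 → E} {C : ℝ} {N : ℕ} (hC : 0 ≤ C)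
    (hg : ∀ x, ‖g x‖ ≤ C * (1 + ‖x‖) ^ N) (y : R2) (s : ℝ) (hs : |s| ≤ 2) (x : R2) :
    ‖g (s • x + y)‖ ≤ C * (2 + ‖y‖) ^ N * (1 + ‖x‖) ^ N := by
  refine (hg _).trans ?_
  rw [mul_assoc, ← mul_pow]
  gcongr
  have h1 : ‖s • x + y‖ ≤ |s| * ‖x‖ + ‖y‖ := by
    refine (norm_add_le _ _).trans ?_
    rw [norm_smul, Real.norm_eq_abs]
  nlinarith [norm_nonneg x, norm_nonneg y, mul_nonneg (norm_nonneg x) (norm_nonneg y),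
    mul_le_mul_of_nonneg_right hs (norm_nonneg x)]

lemma inv_bd {t : ℝ} (ht : t ∈ Iv) : |t⁻¹| ≤ 2 := by
  have h1 : 1/2 < t := ht.1
  rw [abs_of_pos (by positivity)]
  rw [inv_le_comm₀ (by linarith) (by norm_num)]
  linarith

lemma scale_int (w G : R2 → ℝ) {t : ℝ} (ht : 0 < t) :
    ∫ x, G x * (t * w (t • x)) ^ 2 = ∫ z, G (t⁻¹ • z) * w z ^ 2 := by
  have h := Measure.integral_comp_smul volume (fun z : R2 => G (t⁻¹ • z) * w z ^ 2) t
  have d2 : Module.finrank ℝ R2 = 2 := by simp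
  rw [d2, abs_of_pos (by positivity), smul_eq_mul] at h
  simp only [smul_smul, inv_mul_cancel₀ ht.ne', one_smul] at h
  have : ∀ x, G x * (t * w (t • x)) ^ 2 = t ^ 2 * (G x * w (t • x) ^ 2) := fun x => by ring
  simp only [this]
  rw [integral_const_mul, h]
  field_simp

section hfacts
variable {w h : R2 → ℝ} {p : ℝ} {V V1 V2 : ℝ → R2 → ℝ}

lemma V_one (hV : VData w V V1 V2) (x : R2) : V 1 x = w x := by
  rw [hV.eq 1 one_mem_Iv]; simp

lemma w_gd (hV : VData w V V1 V2) : Gd (fun _ x => w x) :=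
  hV.g0.at1.congr fun _ x => V_one hV x

lemma h_pg (hs : ContDiff ℝ 2 h) (hh : Homog h p) (y : R2) :
    Pg (fun t x => h (t⁻¹ • x + y)) := by
  obtain ⟨C, N, hC, hb⟩ := homog_growth (q := p) hs.continuous (fun t ht x => by
    rw [hh t ht x]; rfl)
  exact ⟨⟨_, N, by positivity, fun t ht x => growth_shift hC hb y t⁻¹ (inv_bd ht) x⟩,
    fun t _ => hs.continuous.comp (by fun_prop)⟩

lemma dh_growth (hs : ContDiff ℝ 2 h) (hh : Homog h p) :
    ∃ C : ℝ, ∃ N : ℕ, 0 ≤ C ∧ ∀ x, ‖fderiv ℝ h x‖ ≤ C * (1 + ‖x‖) ^ N :=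
  homog_growth (q := p - 1) (hs.continuous_fderiv (by norm_num))
    (homog_fderiv (hs.differentiable (by norm_num)) hh)

lemma dh_pg (hs : ContDiff ℝ 2 h) (hh : Homog h p) (y v : R2) :
    Pg (fun t x => fderiv ℝ h (t⁻¹ • x + y) v) := by
  obtain ⟨C, N, hC, hb⟩ := dh_growth hs hh
  refine ⟨⟨C * (2 + ‖y‖) ^ N * ‖v‖, N, by positivity, fun t ht x => ?_⟩,
    fun t _ => (cd_fd hs v).continuous.comp (by fun_prop)⟩
  have h1 := growth_shift hC hb y t⁻¹ (inv_bd ht) x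
  have h2 := (fderiv ℝ h (t⁻¹ • x + y)).le_opNorm v
  rw [Real.norm_eq_abs] at h2
  refine h2.trans ?_
  calc _ ≤ (C * (2 + ‖y‖) ^ N * (1 + ‖x‖) ^ N) * ‖v‖ := by gcongr
    _ = _ := by ring

lemma dh_pg' (hs : ContDiff ℝ 2 h) (hh : Homog h p) (y : R2) :
    Pg (fun t x => fderiv ℝ h (t⁻¹ • x + y) x) := by
  obtain ⟨C, N, hC, hb⟩ := dh_growth hs hh
  refine ⟨⟨C * (2 + ‖y‖) ^ N, N + 1, by positivity, fun t ht x => ?_⟩,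
    fun t _ => ((hs.continuous_fderiv (by norm_num)).comp (by fun_prop)).clm_apply continuous_id⟩
  have h1 := growth_shift hC hb y t⁻¹ (inv_bd ht) x
  have h2 := (fderiv ℝ h (t⁻¹ • x + y)).le_opNorm x
  rw [Real.norm_eq_abs] at h2
  refine h2.trans ?_
  calc _ ≤ (C * (2 + ‖y‖) ^ N * (1 + ‖x‖) ^ N) * (1 + ‖x‖) := by gcongr; linarith
    _ = _ := by ring

lemma hh_pg (hs : ContDiff ℝ 2 h) (hh : Homog h p) (y : R2) : Pg (fun _ x => h (x + y)) :=
  (h_pg hs hh y).at1.congr fun _ x => by simp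

lemma dhh_pg (hs : ContDiff ℝ 2 h) (hh : Homog h p) (y v : R2) :
    Pg (fun _ x => fderiv ℝ h (x + y) v) :=
  (dh_pg hs hh y v).at1.congr fun _ x => by simp

lemma Q_deriv (hV : VData w V V1 V2) {g : R2 → ℝ} (hg : Pg (fun _ x => g x)) {t : ℝ} (ht : t ∈ Iv) :
    HasDerivAt (fun s => ∫ x, V s x ^ 2 * g x) (∫ x, 2 * (V t x * V1 t x * g x)) t := by
  refine Gd.hasDerivAt (F := fun t x => V t x ^ 2 * g x)
    (F' := fun t x => 2 * (V t x * V1 t x * g x)) ?_ ?_ ?_ ht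
  · exact ((hV.g0.mul hV.g0.pg).mul hg).congr fun t x => by ring
  · exact (((hV.g0.mul hV.g1.pg).mul hg).mul (Pg.num 2)).congr fun t x => by ring
  · intro x t ht
    have := ((hV.d1 x t ht).pow 2).mul_const (g x)
    convert! this using 1
    ring

lemma Q_rel (hV : VData w V V1 V2) (hs : ContDiff ℝ 2 h) (hh : Homog h p) (y : R2)
    {t : ℝ} (ht : t ∈ Iv) :
    t * (∫ x, 2 * (V t x * V1 t x * h (x + y))) =
      -p * (∫ x, V t x ^ 2 * h (x + y)) + ∫ x, V t x ^ 2 * fderiv ℝ h (x + y) y := by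
  have hd := hs.differentiable (by norm_num)
  have gw := w_gd hV
  have gw2 : Gd (fun _ x => w x ^ 2) := (gw.mul gw.pg).congr fun _ x => by ring
  have ht0 : 0 < t := by linarith [ht.1]
  have sc : ∀ (g : R2 → ℝ), ∀ s ∈ Iv, ∫ x, V s x ^ 2 * g (x + y) = ∫ z, w z ^ 2 * g (s⁻¹ • z + y) := by
    intro g s hs
    have := scale_int w (fun x => g (x + y)) (t := s) (by linarith [hs.1])
    simp only [hV.eq s hs]
    simp only [mul_comm _ (g _)]
    exact this
  have d1 := Q_deriv hV (hh_pg hs hh y) ht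
  have d2 : HasDerivAt (fun s : ℝ => ∫ z, w z ^ 2 * h (s⁻¹ • z + y))
      (∫ z, w z ^ 2 * (-(t ^ 2)⁻¹ * fderiv ℝ h (t⁻¹ • z + y) z)) t := by
    refine Gd.hasDerivAt (F := fun s z => w z ^ 2 * h (s⁻¹ • z + y))
      (F' := fun t z => w z ^ 2 * (-(t ^ 2)⁻¹ * fderiv ℝ h (t⁻¹ • z + y) z)) ?_ ?_ ?_ ht
    · exact gw2.mul (h_pg hs hh y)
    · refine gw2.mul (Pg.mul (Pg.const (fun t => -(t ^ 2)⁻¹) 4 ?_) (dh_pg' hs hh y))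
      intro t ht
      have := inv_bd ht
      rw [abs_neg, ← inv_pow, abs_pow]
      nlinarith [abs_nonneg t⁻¹]
    · intro x t ht
      have ht0 : 0 < t := by linarith [ht.1]
      have a1 : HasDerivAt (fun s : ℝ => s⁻¹ • x + y) ((-(t ^ 2)⁻¹) • x) t :=
        ((hasDerivAt_inv ht0.ne').smul_const x).add_const y
      have a2 : HasDerivAt (fun s : ℝ => h (s⁻¹ • x + y)) _ t :=
        (hd (t⁻¹ • x + y)).hasFDerivAt.comp_hasDerivAt t a1
      have a3 := a2.const_mul (w x ^ 2)
      convert! a3 using 1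
      simp
  have ev : (fun s => ∫ x, V s x ^ 2 * h (x + y)) =ᶠ[𝓝 t]
      (fun s : ℝ => ∫ z, w z ^ 2 * h (s⁻¹ • z + y)) := by
    filter_upwards [Iv_nhds ht] with s hs
    exact sc h s hs
  have e := d1.unique (d2.congr_of_eventuallyEq ev)
  have e2 := sc h t ht
  have e3 := sc (fun z => fderiv ℝ h z y) t ht
  rw [e, e2, e3]
  rw [← integral_const_mul, ← integral_const_mul, ← integral_add]
  · congr 1
    funext z
    have h1 := euler hd hh (t⁻¹ • z + y)
    rw [map_add, map_smul, smul_eq_mul] at h1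
    rw [show fderiv ℝ h (t⁻¹ • z + y) y = p * h (t⁻¹ • z + y) - t⁻¹ * fderiv ℝ h (t⁻¹ • z + y) z by linarith]
    field_simp
    ring
  · exact ((gw2.mul (h_pg hs hh y)).integrable ht).const_mul _
  · exact (gw2.mul (dh_pg hs hh y y)).integrable ht

lemma H_fderiv (hV : VData w V V1 V2) (hs : ContDiff ℝ 2 h) (hh : Homog h p) (y : R2) :
    HasFDerivAt (Hfun h w) (∫ x, w x ^ 2 • fderiv ℝ h (x + y)) y ∧
      Integrable (fun x => w x ^ 2 • fderiv ℝ h (x + y)) := by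
  have gw := w_gd hV
  have gw2 : Gd (fun _ x => w x ^ 2) := (gw.mul gw.pg).congr fun _ x => by ring
  have hd := hs.differentiable (by norm_num)
  have hwc : Continuous w := gw.2 1 one_mem_Iv
  obtain ⟨C, N, hC, hb⟩ := dh_growth hs hh
  have cdh : Continuous (fderiv ℝ h) := hs.continuous_fderiv (by norm_num)
  obtain ⟨D, hD, hdec⟩ := gw2.1 (N + 3)
  have bd : ∀ x, ∀ z ∈ Metric.ball y 1, ‖w x ^ 2 • fderiv ℝ h (x + z)‖ ≤
      (D * (C * (3 + ‖y‖) ^ N)) * ((1 + ‖x‖) ^ 3)⁻¹ := by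
    intro x z hz
    have h1 := growth_shift hC hb z 1 (by norm_num) x
    rw [one_smul] at h1
    have hz' : ‖z‖ ≤ 1 + ‖y‖ := by
      have : ‖z - y‖ < 1 := by simpa [dist_eq_norm] using hz
      have := norm_le_norm_add_norm_sub' z y
      linarith
    have h2 : (2 + ‖z‖) ^ N ≤ (3 + ‖y‖) ^ N := pow_le_pow_left₀ (by positivity) (by linarith) N
    have h3 := hdec 1 one_mem_Iv x
    have hx : 0 < (1 + ‖x‖) ^ 3 := by positivity
    rw [norm_smul, ← div_eq_mul_inv, le_div_iff₀ hx]
    calc ‖w x ^ 2‖ * ‖fderiv ℝ h (x + z)‖ * (1 + ‖x‖) ^ 3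
        ≤ ‖w x ^ 2‖ * (C * (3 + ‖y‖) ^ N * (1 + ‖x‖) ^ N) * (1 + ‖x‖) ^ 3 := by
          gcongr
          refine h1.trans ?_
          gcongr
      _ = ((1 + ‖x‖) ^ (N + 3) * |w x ^ 2|) * (C * (3 + ‖y‖) ^ N) := by
          rw [Real.norm_eq_abs]; ring
      _ ≤ _ := by gcongr
  have ib : Integrable (fun x : R2 => (D * (C * (3 + ‖y‖) ^ N)) * ((1 + ‖x‖) ^ 3)⁻¹) :=
    int_bound.const_mul _
  have meas : AEStronglyMeasurable (fun x => w x ^ 2 • fderiv ℝ h (x + y)) (volume : Measure R2) :=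
    ((hwc.pow 2).smul (cdh.comp (by fun_prop))).aestronglyMeasurable
  constructor
  · unfold Hfun
    refine hasFDerivAt_integral_of_dominated_of_fderiv_le (Metric.ball_mem_nhds y one_pos)
      (F' := fun z x => w x ^ 2 • fderiv ℝ h (x + z)) ?_ ?_ meas
      (ae_of_all _ bd) ib ?_
    · refine Eventually.of_forall fun z => Continuous.aestronglyMeasurable ?_
      exact (hs.continuous.comp (by fun_prop)).mul (hwc.pow 2)
    · refine ((gw2.mul (hh_pg hs hh y)).integrable one_mem_Iv).congr (ae_of_all _ fun x => ?_)
      simp only; ring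
    · refine ae_of_all _ fun x z _ => ?_
      have a1 : HasFDerivAt (fun z : R2 => x + z) (ContinuousLinearMap.id ℝ R2) z :=
        (hasFDerivAt_id z).const_add x
      have a2 : HasFDerivAt (fun z : R2 => h (x + z)) _ z := (hd (x + z)).hasFDerivAt.comp z a1
      have a3 := a2.mul_const (w x ^ 2)
      simpa using! a3
  · exact ib.mono' meas (ae_of_all _ fun x => bd x y (by simp))

lemma P_zero (hV : VData w V V1 V2) (hs : ContDiff ℝ 2 h) (hh : Homog h p) (y : R2)
    (hc : gradient (Hfun h w) y = 0) : ∫ x, w x ^ 2 * fderiv ℝ h (x + y) y = 0 := by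
  obtain ⟨h1, h2⟩ := H_fderiv hV hs hh y
  have h3 : fderiv ℝ (Hfun h w) y = 0 := by
    have := hc
    unfold gradient at this
    simpa using this
  have h4 := h1.fderiv
  rw [h3] at h4
  have h5 := ContinuousLinearMap.integral_apply h2 y
  rw [← h4] at h5
  simpa using h5.symm

lemma H_pos (hw : IsGroundState w) (hV : VData w V V1 V2) (hs : ContDiff ℝ 2 h) (hh : Homog h p)
    (hn : ∀ x, 0 ≤ h x) (y : R2)
    (huniq : ∀ z, gradient (Hfun h w) z = 0 → z = y) : 0 < Hfun h w y := by
  have gw := w_gd hV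
  have hwc : Continuous w := gw.2 1 one_mem_Iv
  have gw2 : Gd (fun _ x => w x ^ 2) := (gw.mul gw.pg).congr fun _ x => by ring
  have hint : Integrable (fun x => h (x + y) * w x ^ 2) :=
    ((gw2.mul (hh_pg hs hh y)).integrable one_mem_Iv).congr (ae_of_all _ fun x => by
      simp only; ring)
  have hnn : 0 ≤ fun x => h (x + y) * w x ^ 2 := fun x => mul_nonneg (hn _) (sq_nonneg _)
  have h0 : 0 ≤ Hfun h w y := integral_nonneg hnn
  rcases h0.lt_or_eq with h1 | h1
  · exact h1
  exfalso
  have h2 := (integral_eq_zero_iff_of_nonneg hnn hint).1 h1.symm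
  have hc : Continuous (fun x => h (x + y) * w x ^ 2) :=
    (hs.continuous.comp (by fun_prop)).mul (hwc.pow 2)
  have h3 : (fun x => h (x + y) * w x ^ 2) = 0 :=
    (hc.ae_eq_iff_eq volume continuous_zero).1 h2
  have h4 : ∀ x, h x = 0 := by
    intro x
    have := congrFun h3 (x - y)
    simp at this
    rcases this with h | h
    · exact h
    · exact absurd h (hw.pos _).ne'
  have h5 : Hfun h w = fun _ => 0 := by
    funext z; simp [Hfun, h4]
  have h6 : ∀ z, z = y := fun z => huniq z (by rw [h5]; simp)
  have h7 := (h6 (EuclideanSpace.single 0 1)).trans (h6 0).symm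
  have := congrArg (fun v : R2 => v 0) h7
  simp at this
end hfacts

end partfive

section final
variable {w h f : R2 → ℝ} {p : ℝ} {V V1 V2 : ℝ → R2 → ℝ}

lemma Z_deriv {F F' : ℝ → R2 → ℝ} (hF : Gd F) (hF' : Gd F')
    (hd : ∀ x, ∀ t ∈ Iv, HasDerivAt (fun s => F s x) (F' t x) t)
    (hz : ∀ t ∈ Iv, ∫ x, F t x = 0) : ∀ t ∈ Iv, ∫ x, F' t x = 0 := by
  intro t ht
  have h1 := hF.hasDerivAt hF' hd ht
  have h2 : HasDerivAt (fun s => ∫ x, F s x) 0 t :=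
    (hasDerivAt_const t (0:ℝ)).congr_of_eventuallyEq (by
      filter_upwards [Iv_nhds ht] with s hs
      exact hz s hs)
  exact h1.unique h2

lemma Gd.cmul {F : ℝ → R2 → ℝ} (hF : Gd F) (c : ℝ) : Gd (fun t x => c * F t x) :=
  (hF.mul (Pg.num c)).congr fun _ _ => mul_comm _ _

lemma Gd.tmul {F : ℝ → R2 → ℝ} (hF : Gd F) : Gd (fun t x => t * F t x) :=
  (hF.mul Pg.time).congr fun _ _ => mul_comm _ _

lemma Gd.sub {F G : ℝ → R2 → ℝ} (hF : Gd F) (hG : Gd G) : Gd (fun t x => F t x - G t x) :=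
  (hF.add (hG.cmul (-1))).congr fun _ _ => by ring

lemma greenA (hw : IsGroundState w) (hV : VData w V V1 V2) (hf : ContDiff ℝ 2 f) (hb : BddFun f)
    (hl : Pg (fun _ x => lap f x)) :
    ∀ t ∈ Iv, ∫ x, (V t x * lap f x - f x * (t ^ 2 * V t x - V t x ^ 3)) = 0 := by
  intro t ht
  have pf := Pg.of_bdd hf.continuous hb
  have gV3 : Gd (fun t x => V t x ^ 3) :=
    ((hV.g0.mul hV.g0.pg).mul hV.g0.pg).congr fun _ _ => by ring
  have gl : Gd (fun t x => t ^ 2 * V t x - V t x ^ 3) :=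
    (hV.g0.tmul.tmul.sub gV3).congr fun _ _ => by ring
  have eV : V t = fun x => t * w (t • x) := funext fun x => hV.eq t ht x
  have cs : ContDiff ℝ 2 (fun x : R2 => w (t • x)) := hw.smooth.comp (contDiff_const_smul t)
  have cV : ContDiff ℝ 2 (V t) := by rw [eV]; exact contDiff_const.mul cs
  have lV : ∀ x, lap (V t) x = t ^ 2 * V t x - V t x ^ 3 := by
    intro x
    have h1 := hw.eqn (t • x)
    rw [eV, lap_const_mul cs, lap_smul_comp hw.smooth]
    simp only
    rw [show lap w (t • x) = w (t • x) - w (t • x) ^ 3 by linarith]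
    ring
  have lV' : lap (V t) = fun x => t ^ 2 * V t x - V t x ^ 3 := funext lV
  have i3 := (hV.g0.mul hl).integrable ht
  have i2 := gl.integrable ht
  have := green cV hf hb (hV.g0.integrable ht) (fun i => by
      refine (((hV.gw i).tmul.tmul).integrable ht).congr (ae_of_all _ fun x => ?_)
      simp only
      rw [eV, fderiv_const_mul (cs.differentiable (by norm_num) x)]
      simp only [smul_apply, smul_eq_mul]
      rw [fderiv_smul_comp (hw.smooth.differentiable (by norm_num))])
    (by rw [lV']; exact i2) i3
  rw [integral_sub i3 (((gl.mul pf).congr fun t x => mul_comm _ _).integrable ht), this, lV']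
  simp only [mul_comm (f _)]
  ring

lemma greenB (hw : IsGroundState w) (hV : VData w V V1 V2) (hf : ContDiff ℝ 2 f) (hb : BddFun f)
    (hl : Pg (fun _ x => lap f x)) :
    Gd (fun t x => V1 t x * lap f x
      - f x * (2 * t * V t x + t ^ 2 * V1 t x - 3 * V t x ^ 2 * V1 t x)) ∧
    ∀ t ∈ Iv, ∫ x, (V1 t x * lap f x
      - f x * (2 * t * V t x + t ^ 2 * V1 t x - 3 * V t x ^ 2 * V1 t x)) = 0 := by
  have pf := Pg.of_bdd hf.continuous hb
  have a := hV.g0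
  have b := hV.g1
  have gE : Gd (fun t x => V1 t x * lap f x
      - f x * (2 * t * V t x + t ^ 2 * V1 t x - 3 * V t x ^ 2 * V1 t x)) :=
    ((b.mul hl).sub ((((a.tmul.cmul 2).add b.tmul.tmul).sub
      (((a.mul a.pg).mul b.pg).cmul 3)).mul pf)).congr fun _ _ => by ring
  refine ⟨gE, Z_deriv (F := fun t x => V t x * lap f x - f x * (t ^ 2 * V t x - V t x ^ 3)) ?_ gE ?_
    (greenA hw hV hf hb hl)⟩
  · exact ((a.mul hl).sub ((a.tmul.tmul.sub ((a.mul a.pg).mul a.pg)).mul pf)).congr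
      fun _ _ => by ring
  · intro x t ht
    have d := hV.d1 x t ht
    have := (d.mul_const (lap f x)).sub
      (((((hasDerivAt_id t).pow 2).mul d).sub (d.pow 3)).const_mul (f x))
    convert! this using 1
    simp only [id, Pi.pow_apply, Pi.mul_apply, Nat.cast_ofNat, Nat.reduceSub]
    ring

lemma greenC (hw : IsGroundState w) (hV : VData w V V1 V2) (hf : ContDiff ℝ 2 f) (hb : BddFun f)
    (hl : Pg (fun _ x => lap f x)) :
    Gd (fun t x => V2 t x * lap f x
      - f x * (2 * V t x + 4 * t * V1 t x + t ^ 2 * V2 t x - 6 * V t x * V1 t x ^ 2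
        - 3 * V t x ^ 2 * V2 t x)) ∧
    ∀ t ∈ Iv, ∫ x, (V2 t x * lap f x
      - f x * (2 * V t x + 4 * t * V1 t x + t ^ 2 * V2 t x - 6 * V t x * V1 t x ^ 2
        - 3 * V t x ^ 2 * V2 t x)) = 0 := by
  have pf := Pg.of_bdd hf.continuous hb
  have a := hV.g0
  have b := hV.g1
  have c := hV.g2
  have gE : Gd (fun t x => V2 t x * lap f x
      - f x * (2 * V t x + 4 * t * V1 t x + t ^ 2 * V2 t x - 6 * V t x * V1 t x ^ 2
        - 3 * V t x ^ 2 * V2 t x)) :=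
    ((c.mul hl).sub ((((((a.cmul 2).add (b.tmul.cmul 4)).add c.tmul.tmul).sub
      (((a.mul b.pg).mul b.pg).cmul 6)).sub
      (((a.mul a.pg).mul c.pg).cmul 3)).mul pf)).congr fun _ _ => by ring
  obtain ⟨g1, z1⟩ := greenB hw hV hf hb hl
  refine ⟨gE, Z_deriv g1 gE ?_ z1⟩
  intro x t ht
  have d := hV.d1 x t ht
  have e := hV.d2 x t ht
  have := (e.mul_const (lap f x)).sub
      ((((((hasDerivAt_id t).const_mul 2).mul d).add (((hasDerivAt_id t).pow 2).mul e)).sub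
        (((d.pow 2).const_mul 3).mul e)).const_mul (f x))
  convert! this using 1
  simp only [id, Pi.pow_apply, Pi.mul_apply, Nat.cast_ofNat, Nat.reduceSub]
  ring

lemma T_rel (hV : VData w V V1 V2) :
    (Gd (fun t x => 4 * V t x ^ 3 * V1 t x - 2 * t * w x ^ 4) ∧
      ∀ t ∈ Iv, ∫ x, (4 * V t x ^ 3 * V1 t x - 2 * t * w x ^ 4) = 0) ∧
    (Gd (fun t x => 12 * V t x ^ 2 * V1 t x ^ 2 + 4 * V t x ^ 3 * V2 t x - 2 * w x ^ 4) ∧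
      ∀ t ∈ Iv, ∫ x, (12 * V t x ^ 2 * V1 t x ^ 2 + 4 * V t x ^ 3 * V2 t x - 2 * w x ^ 4) = 0) := by
  have a := hV.g0
  have b := hV.g1
  have c := hV.g2
  have g := w_gd hV
  have gw : Gd (fun _ x => w x ^ 4) := (((g.mul g.pg).mul g.pg).mul g.pg).congr fun _ _ => by ring
  have g0 : Gd (fun t x => V t x ^ 4) := (((a.mul a.pg).mul a.pg).mul a.pg).congr fun _ _ => by ring
  have gt : Gd (fun t x => t ^ 2 * w x ^ 4) := gw.tmul.tmul.congr fun _ _ => by ring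
  have g1 : Gd (fun t x => 4 * V t x ^ 3 * V1 t x - 2 * t * w x ^ 4) :=
    (((((a.mul a.pg).mul a.pg).mul b.pg).cmul 4).sub (gw.tmul.cmul 2)).congr fun _ _ => by ring
  have g2 : Gd (fun t x => 12 * V t x ^ 2 * V1 t x ^ 2 + 4 * V t x ^ 3 * V2 t x - 2 * w x ^ 4) :=
    ((((((a.mul a.pg).mul b.pg).mul b.pg).cmul 12).add
      ((((a.mul a.pg).mul a.pg).mul c.pg).cmul 4)).sub (gw.cmul 2)).congr fun _ _ => by ring
  have z0 : ∀ t ∈ Iv, ∫ x, (V t x ^ 4 - t ^ 2 * w x ^ 4) = 0 := by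
    intro t ht
    have ht0 : 0 < t := by linarith [ht.1]
    rw [integral_sub (g0.integrable ht) (gt.integrable ht)]
    have := scale_int w (fun x => (t * w (t • x)) ^ 2) ht0
    simp only [smul_smul, mul_inv_cancel₀ ht0.ne', one_smul] at this
    rw [sub_eq_zero]
    simp only [hV.eq t ht]
    convert this using 2 <;> (funext x; ring)
  have z1 := Z_deriv (g0.sub gt) g1 (fun x t ht => by
    have d := hV.d1 x t ht
    have := (d.pow 4).sub (((hasDerivAt_id t).pow 2).mul_const (w x ^ 4))
    convert! this using 1
    simp) z0
  refine ⟨⟨g1, z1⟩, g2, Z_deriv g1 g2 (fun x t ht => ?_) z1⟩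
  have d := hV.d1 x t ht
  have e := hV.d2 x t ht
  have := (((d.pow 3).const_mul 4).mul e).sub
    (((hasDerivAt_id t).const_mul 2).mul_const (w x ^ 4))
  convert! this using 1
  simp only [id, Pi.pow_apply, Pi.mul_apply, Nat.cast_ofNat, Nat.reduceSub]
  ring

lemma Q_rel2 (hV : VData w V V1 V2) (hs : ContDiff ℝ 2 h) (hh : Homog h p) (y : R2) :
    (Gd (fun t x => t * (2 * (V t x * V1 t x * h (x + y))) + p * (V t x ^ 2 * h (x + y))
        - V t x ^ 2 * fderiv ℝ h (x + y) y) ∧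
      ∀ t ∈ Iv, ∫ x, (t * (2 * (V t x * V1 t x * h (x + y))) + p * (V t x ^ 2 * h (x + y))
        - V t x ^ 2 * fderiv ℝ h (x + y) y) = 0) ∧
    (Gd (fun t x => 2 * (V t x * V1 t x * h (x + y))
        + t * (2 * (V1 t x ^ 2 + V t x * V2 t x) * h (x + y))
        + p * (2 * V t x * V1 t x * h (x + y))
        - 2 * V t x * V1 t x * fderiv ℝ h (x + y) y) ∧
      ∀ t ∈ Iv, ∫ x, (2 * (V t x * V1 t x * h (x + y))
        + t * (2 * (V1 t x ^ 2 + V t x * V2 t x) * h (x + y))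
        + p * (2 * V t x * V1 t x * h (x + y))
        - 2 * V t x * V1 t x * fderiv ℝ h (x + y) y) = 0) := by
  have a := hV.g0
  have b := hV.g1
  have c := hV.g2
  have ph := hh_pg hs hh y
  have pg := dhh_pg hs hh y y
  have q1 : Gd (fun t x => t * (2 * (V t x * V1 t x * h (x + y)))) :=
    (((a.mul b.pg).mul ph).cmul 2).tmul
  have q2 : Gd (fun t x => p * (V t x ^ 2 * h (x + y))) :=
    (((a.mul a.pg).mul ph).cmul p).congr fun _ _ => by ring
  have q3 : Gd (fun t x => V t x ^ 2 * fderiv ℝ h (x + y) y) :=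
    ((a.mul a.pg).mul pg).congr fun _ _ => by ring
  have g1 := (q1.add q2).sub q3
  have z1 : ∀ t ∈ Iv, ∫ x, (t * (2 * (V t x * V1 t x * h (x + y))) + p * (V t x ^ 2 * h (x + y))
        - V t x ^ 2 * fderiv ℝ h (x + y) y) = 0 := by
    intro t ht
    have i1 := q1.integrable ht
    have i2 := q2.integrable ht
    have i3 := q3.integrable ht
    have := Q_rel hV hs hh y ht
    have j1 := integral_sub (i1.add i2) i3
    have j2 := integral_add i1 i2
    have j3 := integral_const_mul (μ := volume) t (fun x => 2 * (V t x * V1 t x * h (x + y)))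
    have j4 := integral_const_mul (μ := volume) p (fun x => V t x ^ 2 * h (x + y))
    simp only [Pi.add_apply] at j1
    linarith
  have g2 : Gd (fun t x => 2 * (V t x * V1 t x * h (x + y))
        + t * (2 * (V1 t x ^ 2 + V t x * V2 t x) * h (x + y))
        + p * (2 * V t x * V1 t x * h (x + y))
        - 2 * V t x * V1 t x * fderiv ℝ h (x + y) y) :=
    ((((((a.mul b.pg).mul ph).cmul 2).add
      ((((b.mul b.pg).add (a.mul c.pg)).mul ph).cmul 2).tmul).add
      (((a.mul b.pg).mul ph).cmul (2 * p))).sub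
      (((a.mul b.pg).mul pg).cmul 2)).congr fun _ _ => by ring
  refine ⟨⟨g1, z1⟩, g2, Z_deriv g1 g2 (fun x t ht => ?_) z1⟩
  have d := hV.d1 x t ht
  have e := hV.d2 x t ht
  have := (((hasDerivAt_id t).mul (((d.mul e).mul_const (h (x + y))).const_mul 2)).add
    (((d.pow 2).mul_const (h (x + y))).const_mul p)).sub
      ((d.pow 2).mul_const (fderiv ℝ h (x + y) y))
  convert! this using 1
  simp only [id, Pi.pow_apply, Pi.mul_apply, Nat.cast_ofNat, Nat.reduceSub]
  ring

/-- integrable with zero integral -/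
def ZI (F : R2 → ℝ) : Prop := Integrable F ∧ ∫ x, F x = 0

lemma ZI.add {F G : R2 → ℝ} (hF : ZI F) (hG : ZI G) : ZI (fun x => F x + G x) :=
  ⟨hF.1.add hG.1, by rw [integral_add hF.1 hG.1, hF.2, hG.2, add_zero]⟩

lemma ZI.smul {F : R2 → ℝ} (hF : ZI F) (c : ℝ) : ZI (fun x => c * F x) :=
  ⟨hF.1.const_mul c, by rw [integral_const_mul, hF.2, mul_zero]⟩

lemma ZI.of {F : ℝ → R2 → ℝ} (h : Gd F ∧ ∀ t ∈ Iv, ∫ x, F t x = 0) : ZI (F 1) :=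
  ⟨h.1.integrable one_mem_Iv, h.2 1 one_mem_Iv⟩

end final


/-- Lemma 3.3, identity `II`: `2∫ wψ₅ + 2∫ ψ₁ψ₂ = -(2+p)/2`. -/
theorem identity_II
    (w h : R2 → ℝ) (p : ℝ) (y0 : R2)
    (hw : IsGroundState w) (hp : 2 ≤ p)
    (hsmooth : ContDiff ℝ 2 h)
    (hnonneg : ∀ x, 0 ≤ h x) (hhom : Homog h p)
    (hcrit : gradient (Hfun h w) y0 = 0)
    (huniq : ∀ y, gradient (Hfun h w) y = 0 → y = y0)
    (astar lam : ℝ) (hastar : astar = ∫ x, (w x) ^ 2)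
    (hlam : lam = (p / 2 * Hfun h w y0) ^ ((1:ℝ) / (2 + p)))
    -- `ψ₁`: the unique bounded solution of `∇ψ₁(0)=0`, `Lψ₁ = -w³/a* - h(·+y₀)w/λ^{2+p}`
    (ψ1 : R2 → ℝ)
    (hψ1s : ContDiff ℝ 2 ψ1) (hψ1b : BddFun ψ1) (hψ1g : gradient ψ1 0 = 0)
    (hψ1e : ∀ x, Lop w ψ1 x =
      -((w x) ^ 3) / astar - h (x + y0) * w x / lam ^ ((2:ℝ) + p))
    -- `ψ₂ = -(1/2)(w + x·∇w)`
    (ψ2 : R2 → ℝ) (hψ2 : ∀ x, ψ2 x = -(1 / 2) * (w x + xgrad w x))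
    -- `ψ₅`: the unique bounded solution of `∇ψ₅(0)=0` and (3.20) for `i = 5`
    (ψ5 : R2 → ℝ)
    (hψ5s : ContDiff ℝ 2 ψ5) (hψ5b : BddFun ψ5) (hψ5g : gradient ψ5 0 = 0)
    (hψ5e : ∀ x, Lop w ψ5 x =
      6 * w x * ψ1 x * ψ2 x + ψ1 x
        - (3 * (w x) ^ 2 / astar + h (x + y0) / lam ^ ((2:ℝ) + p)) * ψ2 x
        - (w x / (2 * lam ^ ((2:ℝ) + p))) * ⟪y0, gradient h (x + y0)⟫)
    (hint1 : Integrable fun x => w x * ψ5 x)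
    (hint2 : Integrable fun x => ψ1 x * ψ2 x) :
    2 * (∫ x, w x * ψ5 x) + 2 * (∫ x, ψ1 x * ψ2 x) = -(2 + p) / 2 := by
  obtain ⟨V, V1, V2, hV⟩ := vdata_exists w hw
  have Hp := H_pos hw hV hsmooth hhom hnonneg y0 huniq
  have hl : lam ^ ((2:ℝ) + p) = p / 2 * Hfun h w y0 := by
    rw [hlam, ← Real.rpow_mul (by positivity), one_div_mul_cancel (by linarith), Real.rpow_one]
  rw [hl] at hψ1e hψ5e
  clear hl hlam
  obtain ⟨c, hc⟩ : ∃ c, c = (p / 2 * Hfun h w y0)⁻¹ := ⟨_, rfl⟩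
  obtain ⟨a, ha⟩ : ∃ a, a = astar⁻¹ := ⟨_, rfl⟩
  have hcH : c * (p / 2 * Hfun h w y0) = 1 := by
    rw [hc]; exact inv_mul_cancel₀ (by positivity)
  have gr : ∀ x, ⟪y0, gradient h (x + y0)⟫ = fderiv ℝ h (x + y0) y0 := by
    intro x
    rw [real_inner_comm]
    simp [gradient]
  have gv : ∀ x, V1 1 x = w x + xgrad w x := hV.at1
  have l1 : ∀ x, lap ψ1 x = (1 - 3 * w x ^ 2) * ψ1 x + a * w x ^ 3 + c * (h (x + y0) * w x) := by
    intro x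
    have := hψ1e x
    simp only [Lop] at this
    rw [hc, ha]
    linear_combination -this
  have l5 : ∀ x, lap ψ5 x = (1 - 3 * w x ^ 2) * ψ5 x -
      (-3 * w x * ψ1 x * V1 1 x + ψ1 x + (1/2) * (3 * a * w x ^ 2 + c * h (x + y0)) * V1 1 x
        - (c / 2) * (w x * fderiv ℝ h (x + y0) y0)) := by
    intro x
    have := hψ5e x
    rw [gr, hψ2, ← gv] at this
    simp only [Lop, div_eq_mul_inv, mul_inv] at this
    rw [hc, ha]
    simp only [mul_inv]
    linear_combination -this
  have gw := w_gd hV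
  have g1 := hV.g1.at1
  have p1 := Pg.of_bdd hψ1s.continuous hψ1b
  have p5 := Pg.of_bdd hψ5s.continuous hψ5b
  have ph := hh_pg hsmooth hhom y0
  have pg := dhh_pg hsmooth hhom y0 y0
  have pl1 : Pg (fun _ x => lap ψ1 x) :=
    ((p1.add (((gw.mul gw.pg).mul p1).cmul (-3)).pg).add
      ((((gw.mul gw.pg).mul gw.pg).cmul a).add ((gw.mul ph).cmul c)).pg).congr
      fun _ x => by rw [l1]; ring
  have pl5 : Pg (fun _ x => lap ψ5 x) :=
    ((p5.add ((p1.mul (Pg.num (-1))))).add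
      ((((((gw.mul gw.pg).mul p5).cmul (-3)).add (((gw.mul p1).mul g1.pg).cmul 3)).add
        ((((gw.mul gw.pg).mul g1.pg).cmul (-(3/2) * a)).add ((g1.mul ph).cmul (-(c/2))))).add
        ((gw.mul pg).cmul (c/2))).pg).congr
      fun _ x => by rw [l5]; ring
  have E1 := ZI.of (greenB hw hV hψ1s hψ1b pl1)
  have E5 := ZI.of (greenB hw hV hψ5s hψ5b pl5)
  have E2 := ZI.of (greenC hw hV hψ1s hψ1b pl1)
  have T1 := ZI.of (T_rel hV).1
  have T2 := ZI.of (T_rel hV).2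
  have Q0 := ZI.of (Q_rel2 hV hsmooth hhom y0).1
  have Q1 := ZI.of (Q_rel2 hV hsmooth hhom y0).2
  have P0 : ZI (fun x => w x ^ 2 * fderiv ℝ h (x + y0) y0) :=
    ⟨(((gw.mul gw.pg).mul pg).congr (G := fun _ x => w x ^ 2 * fderiv ℝ h (x + y0) y0)
      fun _ _ => by ring).integrable one_mem_Iv, P_zero hV hsmooth hhom y0 hcrit⟩
  have iH : Integrable (fun x => h (x + y0) * w x ^ 2) :=
    (((gw.mul gw.pg).mul ph).congr (G := fun _ x => h (x + y0) * w x ^ 2)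
      fun _ _ => by ring).integrable one_mem_Iv
  have Z := (((((((E5.smul (-1)).add (E2.smul (1/2))).add (E1.smul (-(1/2)))).add
    (T2.smul (-(a/8)))).add (T1.smul (a/8))).add (Q1.smul (-(c/4)))).add
      ((Q0.add P0).smul (c*(2+p)/4)))
  obtain ⟨F, hF, Z⟩ : ∃ F, F = _ ∧ ZI F := ⟨_, rfl, Z⟩
  have key : ∀ x, 2 * (w x * ψ5 x) + 2 * (ψ1 x * ψ2 x) =
      F x + (-(c*(2+p)*p/4)) * (h (x + y0) * w x ^ 2) := by
    intro x
    have e := congrFun hF x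
    simp only [l1, l5, V_one hV] at e
    rw [e, hψ2, ← gv]
    ring
  have i1 := hint1.const_mul 2
  have i2 := hint2.const_mul 2
  rw [← integral_const_mul, ← integral_const_mul, ← integral_add i1 i2]
  simp only [key]
  rw [integral_add Z.1 (iH.const_mul _), Z.2, integral_const_mul]
  change 0 + -(c * (2 + p) * p / 4) * Hfun h w y0 = _
  linear_combination (-(2 + p) / 2) * hcH
end
end

section
/- Let w be the unique radial positive solution of Δw − w + w³ = 0 in ℝ² with w ∈ H¹(ℝ²). Then the function ψ₂(x) := −(1/2)(w(x) + x·∇w(x)) satisfies −Δψ₂ + (1 − 3w²)ψ₂ = w in ℝ² and ∇ψ₂(0) = 0; moreover, ψ₂ is the unique solution of this problem in C²(ℝ²)∩L^∞(ℝ²). -/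
noncomputable section
open MeasureTheory Filter Real Set
open scoped RealInnerProductSpace Topology

lemma integ_bdd (f : ℝ → ℝ) (hf : Continuous f) (hpos : ∀ r, 0 ≤ r → 0 ≤ f r)
    (hi : IntegrableOn f (Ioi 0)) : 
    ∃ (C : ℝ) (I : ℝ → ℝ), 0 ≤ C ∧ (∀ r, HasDerivAt I (f r) r) ∧ I 0 = 0 ∧
      ∀ r, 0 ≤ r → 0 ≤ I r ∧ I r ≤ C := by
  refine ⟨∫ x in Ioi 0, f x, fun r => ∫ x in (0:ℝ)..r, f x, ?_, ?_, by simp, ?_⟩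
  · exact setIntegral_nonneg measurableSet_Ioi fun x hx => hpos x (le_of_lt hx)
  · intro r
    exact intervalIntegral.integral_hasDerivAt_right (hf.intervalIntegrable _ _)
      hf.stronglyMeasurable.stronglyMeasurableAtFilter hf.continuousAt
  · intro r hr
    refine ⟨intervalIntegral.integral_nonneg hr fun x hx => hpos x hx.1, ?_⟩
    simp only
    rw [intervalIntegral.integral_of_le hr]
    refine setIntegral_mono_set hi ?_ (Eventually.of_forall (fun x hx => hx.1))
    exact (ae_restrict_iff' measurableSet_Ioi).2 (Eventually.of_forall fun x hx => hpos x (le_of_lt hx))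

lemma radial_ode (g g1 g2 : ℝ → ℝ) (h1 : ∀ r, HasDerivAt g (g1 r) r)
    (h2 : ∀ r, HasDerivAt g1 (g2 r) r)
    (ode : ∀ r, r * g2 r + g1 r = r * (g r - g r ^ 3))
    (hpos : ∀ r, 0 < g r)
    (hI2 : IntegrableOn (fun r => r * g r ^ 2) (Ioi 0))
    (hI4 : IntegrableOn (fun r => r * g r ^ 4) (Ioi 0)) :
    2 ≤ g 0 ^ 2 ∧ ∃ M, ∀ r, 0 ≤ r → |g r| ≤ M ∧ |r * g1 r| ≤ M := by
  have cg : Continuous g := continuous_iff_continuousAt.2 fun r => (h1 r).continuousAt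
  have cg1 : Continuous g1 := continuous_iff_continuousAt.2 fun r => (h2 r).continuousAt
  obtain ⟨C2, I, hC2, dI, I0, bI⟩ := integ_bdd (fun r => r * g r ^ 2) (by fun_prop)
    (fun r hr => by positivity) hI2
  obtain ⟨C4, H, hC4, dH, H0, bH⟩ := integ_bdd (fun r => r * g r ^ 4) (by fun_prop)
    (fun r hr => by positivity) hI4
  -- Pohozaev identity
  have hP : ∀ r, (r * g1 r) ^ 2 / 2 + r ^ 2 * (g r ^ 4 / 4 - g r ^ 2 / 2) = H r / 2 - I r := by
    have hd : ∀ r, HasDerivAt (fun r => (r * g1 r) ^ 2 / 2 + r ^ 2 * (g r ^ 4 / 4 - g r ^ 2 / 2)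
        - (H r / 2 - I r)) 0 r := by
      intro r
      have A := ((((hasDerivAt_id r).mul (h2 r)).pow 2).div_const 2)
      have B := ((hasDerivAt_id r).pow 2).mul
        ((((h1 r).pow 4).div_const 4).sub (((h1 r).pow 2).div_const 2))
      have C := (A.add B).sub (((dH r).div_const 2).sub (dI r))
      refine C.congr_deriv ?_
      simp
      linear_combination ((r * g1 r)) * ode r
    intro r
    have := is_const_of_deriv_eq_zero (fun r => (hd r).differentiableAt) (fun r => (hd r).deriv) r 0
    simp [I0, H0] at this
    linarith
  -- energy
  have hg10 : g1 0 = 0 := by simpa using ode 0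
  have dE : ∀ r, HasDerivAt (fun r => g1 r ^ 2 / 2 + (g r ^ 4 / 4 - g r ^ 2 / 2))
      (g1 r * (g2 r + g r ^ 3 - g r)) r := by
    intro r
    have C := (((h2 r).pow 2).div_const 2).add
        ((((h1 r).pow 4).div_const 4).sub (((h1 r).pow 2).div_const 2))
    refine C.congr_deriv ?_
    simp
    ring
  have hE : AntitoneOn (fun r => g1 r ^ 2 / 2 + (g r ^ 4 / 4 - g r ^ 2 / 2)) (Ici 0) := by
    refine antitoneOn_of_deriv_nonpos (convex_Ici 0)
      (fun r _ => (dE r).continuousAt.continuousWithinAt)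
      (fun r _ => (dE r).differentiableAt.differentiableWithinAt) ?_
    intro r hr
    rw [interior_Ici] at hr
    have hr : 0 < r := hr
    rw [(dE r).deriv]
    have : r * (g1 r * (g2 r + g r ^ 3 - g r)) = - g1 r ^ 2 := by
      linear_combination (g1 r) * ode r
    by_contra hc
    push Not at hc
    have := mul_pos hr hc
    nlinarith [sq_nonneg (g1 r)]
  have hE0 : ∀ r, 0 ≤ r → 0 ≤ g1 r ^ 2 / 2 + (g r ^ 4 / 4 - g r ^ 2 / 2) := by
    intro r hr
    by_contra hc
    push Not at hc
    set c := g1 r ^ 2 / 2 + (g r ^ 4 / 4 - g r ^ 2 / 2) with hcdef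
    -- take s large
    have key : ∀ s, r ≤ s → - C2 ≤ s ^ 2 * c := by
      intro s hs
      have a := hE (show r ∈ Ici 0 from hr) (show s ∈ Ici 0 from hr.trans hs) hs
      simp only [← hcdef] at a
      have b := hP s
      have d := bI s (hr.trans hs)
      have e := bH s (hr.trans hs)
      nlinarith [mul_le_mul_of_nonneg_left a (sq_nonneg s)]
    have t : Tendsto (fun s : ℝ => s ^ 2 * c) atTop atBot :=
      (tendsto_pow_atTop (by norm_num)).atTop_mul_const_of_neg hc
    obtain ⟨s, hs, hs'⟩ := ((t.eventually_lt_atBot (-C2)).and (eventually_ge_atTop r)).exists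
    linarith [key s hs']
  have hcrit : ∀ r, 0 ≤ r → g1 r = 0 → 2 ≤ g r ^ 2 := by
    intro r hr h
    have := hE0 r hr
    rw [h] at this
    have hp := pow_pos (hpos r) 2
    by_contra hc
    push Not at hc
    nlinarith
  refine ⟨hcrit 0 le_rfl hg10, ?_⟩
  -- bound for g
  have hgb : ∃ M0, ∀ r, 0 ≤ r → |g r| ≤ M0 := by
    set c := g1 0 ^ 2 / 2 + (g 0 ^ 4 / 4 - g 0 ^ 2 / 2) with hcdef
    refine ⟨4 * c + 4, fun r hr => ?_⟩
    have a := hE (show (0:ℝ) ∈ Ici 0 from self_mem_Ici) (show r ∈ Ici 0 from hr) hr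
    simp only [← hcdef] at a
    rw [abs_of_pos (hpos r)]
    have hc0 : 0 ≤ c := hE0 0 le_rfl
    nlinarith [sq_nonneg (g r ^ 2 - 2), sq_nonneg (g r - 1), sq_nonneg (g1 r)]
  -- exists r1 > 0 with g1 r1 ≤ 0
  have hr1 : ∃ r1, 0 < r1 ∧ g1 r1 ≤ 0 := by
    by_contra hc
    push Not at hc
    have hmono : MonotoneOn g (Ici 0) := by
      refine monotoneOn_of_deriv_nonneg (convex_Ici 0) cg.continuousOn
        (fun r _ => (h1 r).differentiableAt.differentiableWithinAt) ?_
      intro r hr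
      rw [interior_Ici] at hr
      rw [(h1 r).deriv]
      exact (hc r hr).le
    have dQ : ∀ r, HasDerivAt (fun r => I r - g 0 ^ 2 * r ^ 2 / 2) (r * g r ^ 2 - g 0 ^ 2 * r) r := by
      intro r
      have := (dI r).sub ((((hasDerivAt_id r).pow 2).const_mul (g 0 ^ 2)).div_const 2)
      refine this.congr_deriv ?_
      simp
      ring
    have hQ : MonotoneOn (fun r => I r - g 0 ^ 2 * r ^ 2 / 2) (Ici 0) := by
      refine monotoneOn_of_deriv_nonneg (convex_Ici 0)
        (fun r _ => (dQ r).continuousAt.continuousWithinAt)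
        (fun r _ => (dQ r).differentiableAt.differentiableWithinAt) ?_
      intro r hr
      rw [interior_Ici] at hr
      have hr : 0 < r := hr
      rw [(dQ r).deriv]
      have a := hmono (show (0:ℝ) ∈ Ici 0 from self_mem_Ici) (show r ∈ Ici 0 from hr.le) hr.le
      have : g 0 ^ 2 ≤ g r ^ 2 := pow_le_pow_left₀ (hpos 0).le a 2
      nlinarith
    have hp : 0 < g 0 ^ 2 / 2 := by have := hpos 0; positivity
    have t : Tendsto (fun s : ℝ => s ^ 2 * (g 0 ^ 2 / 2)) atTop atTop :=
      (tendsto_pow_atTop (by norm_num)).atTop_mul_const hp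
    obtain ⟨s, hs, hs'⟩ := ((t.eventually_gt_atTop C2).and (eventually_ge_atTop 0)).exists
    have a := hQ (show (0:ℝ) ∈ Ici 0 from self_mem_Ici) (show s ∈ Ici 0 from hs') hs'
    simp [I0] at a
    have := bI s hs'
    nlinarith
  obtain ⟨r1, hr1, hg1⟩ := hr1
  have hneg : ∀ r, r1 ≤ r → g1 r ≤ 0 := by
    intro r hr
    have dp : ∀ x, HasDerivAt (fun r => r * g1 r) (g1 x + x * g2 x) x := by
      intro x
      have := (hasDerivAt_id x).mul (h2 x)
      refine this.congr_deriv ?_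
      simp
    have := image_le_of_deriv_right_lt_deriv_boundary' (f := fun r => r * g1 r)
      (f' := fun x => g1 x + x * g2 x) (a := r1) (b := r) (B := fun _ => 0) (B' := fun _ => 0)
      (by fun_prop) (fun x _ => (dp x).hasDerivWithinAt) (by nlinarith) (by fun_prop)
      (fun x _ => (hasDerivAt_const x (0:ℝ)).hasDerivWithinAt) ?_ (show r ∈ Icc r1 r from ⟨hr, le_rfl⟩)
    · have hr0 : 0 < r := by linarith
      by_contra hc
      push Not at hc
      have := mul_pos hr0 hc
      linarith
    · intro x hx h0
      have hx0 : 0 < x := by linarith [hx.1]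
      have hz : g1 x = 0 := by
        rcases mul_eq_zero.1 h0 with h | h
        · linarith
        · exact h
      have a := hcrit x hx0.le hz
      have b := ode x
      have c : g x - g x ^ 3 < 0 := by nlinarith [hpos x]
      nlinarith [mul_pos_of_neg_of_neg c (show -x < 0 by linarith)]
  have dQ : ∀ r, HasDerivAt (fun r => r ^ 2 * g r ^ 2 - 2 * I r) (2 * r ^ 2 * g r * g1 r) r := by
    intro r
    have := (((hasDerivAt_id r).pow 2).mul ((h1 r).pow 2)).sub ((dI r).const_mul 2)
    refine this.congr_deriv ?_
    simp
    ring
  have hQ : AntitoneOn (fun r => r ^ 2 * g r ^ 2 - 2 * I r) (Ici r1) := by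
    refine antitoneOn_of_deriv_nonpos (convex_Ici r1)
      (fun r _ => (dQ r).continuousAt.continuousWithinAt)
      (fun r _ => (dQ r).differentiableAt.differentiableWithinAt) ?_
    intro r hr
    rw [interior_Ici] at hr
    have hr : r1 < r := hr
    rw [(dQ r).deriv]
    exact mul_nonpos_of_nonneg_of_nonpos (by have := hpos r; positivity) (hneg r hr.le)
  obtain ⟨M0, hM0⟩ := hgb
  have hM00 : 0 ≤ M0 := (abs_nonneg _).trans (hM0 0 le_rfl)
  -- bound for r^2 g^2
  have hrg : ∀ r, 0 ≤ r → r ^ 2 * g r ^ 2 ≤ r1 ^ 2 * M0 ^ 2 + 2 * C2 := by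
    intro r hr
    have hsq : ∀ s, 0 ≤ s → g s ^ 2 ≤ M0 ^ 2 := by
      intro s hs
      rw [← sq_abs (g s)]
      exact pow_le_pow_left₀ (abs_nonneg _) (hM0 s hs) 2
    rcases le_total r r1 with h | h
    · have : r ^ 2 ≤ r1 ^ 2 := pow_le_pow_left₀ hr h 2
      have := mul_le_mul this (hsq r hr) (sq_nonneg _) (sq_nonneg _)
      linarith
    · have a := hQ (show r1 ∈ Ici r1 from self_mem_Ici) (show r ∈ Ici r1 from h) h
      simp only at a
      have b := bI r hr
      have c := bI r1 hr1.le
      nlinarith [mul_le_mul_of_nonneg_left (hsq r1 hr1.le) (sq_nonneg r1)]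
  set K := r1 ^ 2 * M0 ^ 2 + 2 * C2 + C4 with hK
  have hK0 : 0 ≤ K := by positivity
  refine ⟨max M0 (K + 1), fun r hr => ⟨(hM0 r hr).trans (le_max_left _ _), le_max_of_le_right ?_⟩⟩
  have : (r * g1 r) ^ 2 ≤ (K + 1) ^ 2 := by
    have a := hP r
    have b := bI r hr
    have c := bH r hr
    have d := hrg r hr
    have e : 0 ≤ r ^ 2 * (g r ^ 4) := by positivity
    nlinarith
  exact abs_le_of_sq_le_sq this (by linarith)

local notation "e₀" => (EuclideanSpace.single (0 : Fin 2) (1 : ℝ) : R2)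
local notation "e₁" => (EuclideanSpace.single (1 : Fin 2) (1 : ℝ) : R2)

def DD (i : Fin 2) (f : R2 → ℝ) (x : R2) : ℝ := fderiv ℝ f x (EuclideanSpace.single i 1)

lemma two_le_top : (2 : WithTop ℕ∞) ≤ ((⊤ : ℕ∞) : WithTop ℕ∞) :=
  WithTop.coe_le_coe.2 (le_top : (2 : ℕ∞) ≤ ⊤)

abbrev Sm (f : R2 → ℝ) : Prop := ContDiff ℝ (⊤ : ℕ∞) f

lemma Sm.diff {f : R2 → ℝ} (h : Sm f) : Differentiable ℝ f := h.differentiable (by simp)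

lemma Sm.dd {f : R2 → ℝ} (h : Sm f) (i : Fin 2) : Sm (DD i f) := by
  have : ContDiff ℝ (⊤ : ℕ∞) (fderiv ℝ f) := h.fderiv_right (by simp)
  exact this.clm_apply contDiff_const

lemma Sm.coord (j : Fin 2) : Sm (fun x : R2 => x j) := by
  unfold Sm; fun_prop

lemma DD_add (i) {f g : R2 → ℝ} (hf : Sm f) (hg : Sm g) (x) :
    DD i (fun y => f y + g y) x = DD i f x + DD i g x := by
  unfold DD
  rw [fderiv_fun_add (hf.diff x) (hg.diff x)]; rfl

lemma DD_mul (i) {f g : R2 → ℝ} (hf : Sm f) (hg : Sm g) (x) :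
    DD i (fun y => f y * g y) x = f x * DD i g x + g x * DD i f x := by
  unfold DD
  rw [fderiv_fun_mul (hf.diff x) (hg.diff x)]; rfl

lemma DD_const (i) (c : ℝ) (x) : DD i (fun _ => c) x = 0 := by
  unfold DD; simp

lemma DD_coord (i j : Fin 2) (x) : DD i (fun y : R2 => y j) x = if i = j then 1 else 0 := by
  unfold DD
  have : (fun y : R2 => y j) = (EuclideanSpace.proj j : R2 →L[ℝ] ℝ) := rfl
  rw [this, ContinuousLinearMap.fderiv]
  simp [PiLp.single_apply, eq_comm]

lemma DD_comm {f : R2 → ℝ} (hf : Sm f) (i j) (x) : DD i (DD j f) x = DD j (DD i f) x := by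
  have hd : Differentiable ℝ (fderiv ℝ f) :=
    (show ContDiff ℝ (⊤ : ℕ∞) (fderiv ℝ f) from hf.fderiv_right (by simp)).differentiable (by simp)
  have key : ∀ a b : Fin 2, DD a (DD b f) x =
      fderiv ℝ (fderiv ℝ f) x (EuclideanSpace.single a 1) (EuclideanSpace.single b 1) := by
    intro a b
    unfold DD
    rw [fderiv_clm_apply (hd x) (differentiableAt_const _)]
    simp
  rw [key, key]
  exact (hf.contDiffAt.isSymmSndFDerivAt (by rw [minSmoothness_of_isRCLikeNormedField]; exact two_le_top)) _ _

lemma lap_eq (f : R2 → ℝ) (x) : lap f x = DD 0 (DD 0 f) x + DD 1 (DD 1 f) x := by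
  unfold lap DD; rw [Fin.sum_univ_two]

lemma vec_eq (x : R2) : x = x 0 • e₀ + x 1 • e₁ := by
  ext i; fin_cases i <;> simp

lemma fderiv_vec (f : R2 → ℝ) (x v : R2) : fderiv ℝ f x v = v 0 * DD 0 f x + v 1 * DD 1 f x := by
  conv_lhs => rw [vec_eq v]
  simp [DD]

lemma xgrad_eq (f : R2 → ℝ) (x) : xgrad f x = x 0 * DD 0 f x + x 1 * DD 1 f x := by
  unfold xgrad
  rw [inner_gradient_right, fderiv_vec]; simp

lemma gradient_zero_iff (f : R2 → ℝ) (x) : gradient f x = 0 ↔ DD 0 f x = 0 ∧ DD 1 f x = 0 := by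
  unfold gradient
  rw [map_eq_zero_iff _ (LinearIsometryEquiv.injective _)]
  constructor
  · intro h; simp [DD, h]
  · rintro ⟨h0, h1⟩
    ext v
    rw [fderiv_vec, h0, h1]; simp

/-- second derivatives of u = w + x·∇w -/
lemma u_D (w : R2 → ℝ) (h : Sm w) (i : Fin 2) (x : R2) :
    DD i (fun y => w y + (y 0 * DD 0 w y + y 1 * DD 1 w y)) x =
      2 * DD i w x + (x 0 * DD 0 (DD i w) x + x 1 * DD 1 (DD i w) x) := by
  have m0 : Sm (fun y : R2 => y 0 * DD 0 w y) := (Sm.coord 0).mul (h.dd 0)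
  have m1 : Sm (fun y : R2 => y 1 * DD 1 w y) := (Sm.coord 1).mul (h.dd 1)
  rw [DD_add i h (m0.add m1), DD_add i m0 m1, DD_mul i (Sm.coord 0) (h.dd 0),
    DD_mul i (Sm.coord 1) (h.dd 1), DD_coord, DD_coord, DD_comm h i 0, DD_comm h i 1]
  fin_cases i <;> simp <;> ring

lemma Sm.u {w : R2 → ℝ} (h : Sm w) : Sm (fun y => w y + (y 0 * DD 0 w y + y 1 * DD 1 w y)) :=
  h.add (((Sm.coord 0).mul (h.dd 0)).add ((Sm.coord 1).mul (h.dd 1)))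

lemma u_DD (w : R2 → ℝ) (h : Sm w) (i : Fin 2) (x : R2) :
    DD i (DD i (fun y => w y + (y 0 * DD 0 w y + y 1 * DD 1 w y))) x =
      3 * DD i (DD i w) x + (x 0 * DD 0 (DD i (DD i w)) x + x 1 * DD 1 (DD i (DD i w)) x) := by
  have e : DD i (fun y => w y + (y 0 * DD 0 w y + y 1 * DD 1 w y)) =
      fun x => DD i w x + (DD i w x + (x 0 * DD 0 (DD i w) x + x 1 * DD 1 (DD i w) x)) := by
    funext x; rw [u_D w h]; ring
  rw [e, DD_add i (h.dd i) (h.dd i).u, u_D _ (h.dd i)]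
  ring

lemma lap_w (w : R2 → ℝ) (h : Sm w) (heq : ∀ x, lap w x - w x + (w x) ^ 3 = 0) (j : Fin 2) (x : R2) :
    DD j (DD 0 (DD 0 w)) x + DD j (DD 1 (DD 1 w)) x = (1 - 3 * w x ^ 2) * DD j w x := by
  rw [← DD_add j ((h.dd 0).dd 0) ((h.dd 1).dd 1)]
  have : (fun y => DD 0 (DD 0 w) y + DD 1 (DD 1 w) y) = fun y => w y + (-1) * (w y * (w y * w y)) := by
    funext y
    have := heq y
    rw [lap_eq] at this
    linear_combination this
  have h2 : Sm (fun y => w y * w y) := h.mul h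
  have h3 : Sm (fun y => w y * (w y * w y)) := h.mul h2
  have hc : Sm (fun _ : R2 => (-1 : ℝ)) := contDiff_const
  rw [this, DD_add j h (hc.mul h3), DD_mul j hc h3, DD_mul j h h2, DD_mul j h h, DD_const]
  ring

lemma Lop_psi (w : R2 → ℝ) (h : Sm w) (heq : ∀ x, lap w x - w x + (w x) ^ 3 = 0) (x : R2) :
    Lop w (fun y => -(1 / 2) * (w y + xgrad w y)) x = w x := by
  have hu := h.u
  have hc : Sm (fun _ : R2 => (-(1/2) : ℝ)) := contDiff_const
  have e : ∀ i, DD i (fun y => -(1 / 2) * (w y + (y 0 * DD 0 w y + y 1 * DD 1 w y))) =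
      fun y => -(1/2) * DD i (fun y => w y + (y 0 * DD 0 w y + y 1 * DD 1 w y)) y := by
    intro i; funext y; rw [DD_mul i hc hu, DD_const]; ring
  unfold Lop
  simp only [xgrad_eq]
  rw [lap_eq, e, e, DD_mul 0 hc (hu.dd 0), DD_mul 1 hc (hu.dd 1), u_DD w h, u_DD w h, DD_const, DD_const]
  have a := lap_w w h heq 0 x
  have b := lap_w w h heq 1 x
  have c := heq x
  rw [lap_eq] at c
  linear_combination (x 0 / 2) * a + (x 1 / 2) * b + (3/2) * c

lemma rot (w : R2 → ℝ) (h : Sm w) (hr : ∀ x y : R2, ‖x‖ = ‖y‖ → w x = w y) (x : R2) :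
    x 0 * DD 1 w x + (-1) * (x 1 * DD 0 w x) = 0 := by
  have hc : HasDerivAt (fun s : ℝ => cos s • x + sin s • (!₂[-x 1, x 0] : R2))
      ((-sin 0) • x + cos 0 • (!₂[-x 1, x 0] : R2)) 0 :=
    ((hasDerivAt_cos 0).smul_const _).add ((hasDerivAt_sin 0).smul_const _)
  have hx : cos 0 • x + sin 0 • (!₂[-x 1, x 0] : R2) = x := by simp
  have hf : HasFDerivAt w (fderiv ℝ w x) (cos 0 • x + sin 0 • (!₂[-x 1, x 0] : R2)) := by
    rw [hx]; exact (h.diff x).hasFDerivAt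
  have := hf.comp_hasDerivAt (0:ℝ) hc
  have hcst : (w ∘ fun s : ℝ => cos s • x + sin s • (!₂[-x 1, x 0] : R2)) = fun _ => w x := by
    funext s
    apply hr
    rw [EuclideanSpace.norm_eq, EuclideanSpace.norm_eq]
    congr 1
    simp [Fin.sum_univ_two]
    linear_combination (x 0 ^ 2 + x 1 ^ 2) * sin_sq_add_cos_sq s
  rw [hcst] at this
  have h0 := this.unique (hasDerivAt_const (0:ℝ) (w x))
  rw [fderiv_vec] at h0
  simp at h0
  linarith

/-- derivatives of the rotation identity -/
lemma rotD (w : R2 → ℝ) (h : Sm w) (hr : ∀ x y : R2, ‖x‖ = ‖y‖ → w x = w y) :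
    (∀ x : R2, DD 1 w x + (x 0 * DD 0 (DD 1 w) x + (-1) * (x 1 * DD 0 (DD 0 w) x)) = 0) ∧
    (∀ x : R2, x 0 * DD 1 (DD 1 w) x + (-1) * (DD 0 w x + x 1 * DD 1 (DD 0 w) x) = 0) := by
  have e : (fun x : R2 => x 0 * DD 1 w x + (-1) * (x 1 * DD 0 w x)) = fun _ => 0 :=
    funext (rot w h hr)
  have m0 : Sm (fun x : R2 => x 0 * DD 1 w x) := (Sm.coord 0).mul (h.dd 1)
  have m1 : Sm (fun x : R2 => x 1 * DD 0 w x) := (Sm.coord 1).mul (h.dd 0)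
  have hc : Sm (fun _ : R2 => (-1 : ℝ)) := contDiff_const
  have key : ∀ i x, DD i (fun x : R2 => x 0 * DD 1 w x + (-1) * (x 1 * DD 0 w x)) x = 0 := by
    intro i x; rw [e, DD_const]
  constructor
  · intro x
    have := key 0 x
    rw [DD_add 0 m0 (hc.mul m1), DD_mul 0 hc m1, DD_mul 0 (Sm.coord 0) (h.dd 1),
      DD_mul 0 (Sm.coord 1) (h.dd 0), DD_const, DD_coord, DD_coord] at this
    simp at this
    linarith
  · intro x
    have := key 1 x
    rw [DD_add 1 m0 (hc.mul m1), DD_mul 1 hc m1, DD_mul 1 (Sm.coord 0) (h.dd 1),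
      DD_mul 1 (Sm.coord 1) (h.dd 0), DD_const, DD_coord, DD_coord] at this
    simp at this
    linarith

lemma hess0 (w : R2 → ℝ) (h : Sm w) (hr : ∀ x y : R2, ‖x‖ = ‖y‖ → w x = w y) :
    DD 0 w 0 = 0 ∧ DD 1 w 0 = 0 ∧ DD 0 (DD 1 w) 0 = 0 ∧ DD 0 (DD 0 w) 0 = DD 1 (DD 1 w) 0 := by
  obtain ⟨A, B⟩ := rotD w h hr
  have hc : Sm (fun _ : R2 => (-1 : ℝ)) := contDiff_const
  refine ⟨by simpa using B 0, by simpa using A 0, ?_, ?_⟩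
  · have : DD 0 (fun x : R2 => DD 1 w x + (x 0 * DD 0 (DD 1 w) x + (-1) * (x 1 * DD 0 (DD 0 w) x))) 0 = 0 := by
      rw [funext A, DD_const]
    have m0 : Sm (fun x : R2 => x 0 * DD 0 (DD 1 w) x) := (Sm.coord 0).mul ((h.dd 1).dd 0)
    have m1 : Sm (fun x : R2 => x 1 * DD 0 (DD 0 w) x) := (Sm.coord 1).mul ((h.dd 0).dd 0)
    rw [DD_add 0 (h.dd 1) (m0.add (hc.mul m1)), DD_add 0 m0 (hc.mul m1), DD_mul 0 hc m1,
      DD_mul 0 (Sm.coord 0) ((h.dd 1).dd 0), DD_mul 0 (Sm.coord 1) ((h.dd 0).dd 0), DD_const, DD_coord, DD_coord] at this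
    simp at this
    linarith
  · have : DD 0 (fun x : R2 => x 0 * DD 1 (DD 1 w) x + (-1) * (DD 0 w x + x 1 * DD 1 (DD 0 w) x)) 0 = 0 := by
      rw [funext B, DD_const]
    have m0 : Sm (fun x : R2 => x 0 * DD 1 (DD 1 w) x) := (Sm.coord 0).mul ((h.dd 1).dd 1)
    have m1 : Sm (fun x : R2 => x 1 * DD 1 (DD 0 w) x) := (Sm.coord 1).mul ((h.dd 0).dd 1)
    have m2 : Sm (fun x : R2 => DD 0 w x + x 1 * DD 1 (DD 0 w) x) := (h.dd 0).add m1
    rw [DD_add 0 m0 (hc.mul m2), DD_mul 0 hc m2, DD_add 0 (h.dd 0) m1,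
      DD_mul 0 (Sm.coord 0) ((h.dd 1).dd 1), DD_mul 0 (Sm.coord 1) ((h.dd 0).dd 1), DD_const, DD_coord, DD_coord] at this
    simp at this
    linarith

lemma radial_deriv (f : R2 → ℝ) (h : Sm f) (v : R2) (t : ℝ) :
    HasDerivAt (fun s : ℝ => f (s • v)) (v 0 * DD 0 f (t • v) + v 1 * DD 1 f (t • v)) t := by
  rw [← fderiv_vec]
  have := (h.diff (t • v)).hasFDerivAt.comp_hasDerivAt t ((hasDerivAt_id t).smul_const v)
  simp only [one_smul] at this
  exact this

lemma ground_facts (w : R2 → ℝ) (hw : IsGroundState w) (h : Sm w) :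
    2 ≤ w 0 ^ 2 ∧ ∃ M, ∀ x : R2, |w x| ≤ M ∧ |x 0 * DD 0 w x + x 1 * DD 1 w x| ≤ M := by
  have hnorm : ∀ x : R2, w x = w (‖x‖ • e₀) := by
    intro x; apply hw.radial; simp [norm_smul]
  have d1 : ∀ r : ℝ, HasDerivAt (fun s : ℝ => w (s • e₀)) (DD 0 w (r • e₀)) r := by
    intro r; simpa using radial_deriv w h e₀ r
  have d2 : ∀ r : ℝ, HasDerivAt (fun s : ℝ => DD 0 w (s • e₀)) (DD 0 (DD 0 w) (r • e₀)) r := by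
    intro r; simpa using radial_deriv (DD 0 w) (h.dd 0) e₀ r
  have hint : ∀ k : ℕ, Integrable (fun x => (w x) ^ k) →
      IntegrableOn (fun r : ℝ => r * (w (r • e₀)) ^ k) (Ioi 0) := by
    intro k hk
    have : Integrable (fun x : R2 => (fun r : ℝ => (w (r • e₀)) ^ k) ‖x‖) := by
      refine hk.congr (Eventually.of_forall fun x => ?_)
      simp only
      rw [hnorm x]
    replace this := (integrable_fun_norm_addHaar (volume : Measure R2) (f := fun r : ℝ => (w (r • e₀)) ^ k)).1 this
    simpa using this
  obtain ⟨h0, M, hM⟩ := radial_ode (fun r => w (r • e₀)) (fun r => DD 0 w (r • e₀))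
    (fun r => DD 0 (DD 0 w) (r • e₀)) d1 d2 (by
      intro r
      have a := (rotD w h hw.radial).2 (r • e₀)
      have b := hw.eqn (r • e₀)
      rw [lap_eq] at b
      simp at a
      linear_combination r * b - a) (fun r => hw.pos _) (hint 2 hw.sqInt) (hint 4 hw.quarticInt)
  refine ⟨by simpa using h0, M, fun x => ⟨?_, ?_⟩⟩
  · rw [hnorm]; exact (hM _ (norm_nonneg x)).1
  · have a := radial_deriv w h x 1
    have b : HasDerivAt (fun s : ℝ => w ((s * ‖x‖) • e₀)) (DD 0 w (‖x‖ • e₀) * ‖x‖) 1 := by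
      have c : HasDerivAt (fun s : ℝ => s * ‖x‖) ‖x‖ 1 := by
        simpa using (hasDerivAt_id (1:ℝ)).mul_const ‖x‖
      have d := d1 (1 * ‖x‖)
      have := HasDerivAt.comp (1:ℝ) d c
      simpa [Function.comp_def] using this
    have e : (fun s : ℝ => w (s • x)) = (fun s : ℝ => w ((s * ‖x‖) • e₀)) := by
      funext s; apply hw.radial; simp [norm_smul]
    rw [e] at a
    have := a.unique b
    simp only [one_smul] at this
    rw [this, mul_comm]
    exact (hM _ (norm_nonneg x)).2

/-- `ψ₂ = -(1/2)(w + x·∇w)` satisfies `-Δψ₂ + (1-3w²)ψ₂ = w`, `∇ψ₂(0) = 0`,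
and is the unique such solution in `C²(ℝ²) ∩ L^∞(ℝ²)`. -/
theorem psi2_characterization
    (w : R2 → ℝ) (hw : IsGroundState w) (hw' : ContDiff ℝ (⊤ : ℕ∞) w)
    -- kernel of the linearized operator on bounded functions: `span{∂w/∂x₁, ∂w/∂x₂}`
    (hker : ∀ ξ : R2 → ℝ, ContDiff ℝ 2 ξ → BddFun ξ → (∀ x, Lop w ξ x = 0) →
      ∃ b1 b2 : ℝ, ξ = fun x =>
        b1 * fderiv ℝ w x (EuclideanSpace.single 0 1) +
          b2 * fderiv ℝ w x (EuclideanSpace.single 1 1)) :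
    (∀ x, Lop w (fun y => -(1 / 2) * (w y + xgrad w y)) x = w x) ∧
    gradient (fun y => -(1 / 2) * (w y + xgrad w y)) 0 = 0 ∧
    ContDiff ℝ 2 (fun y => -(1 / 2) * (w y + xgrad w y)) ∧
    BddFun (fun y => -(1 / 2) * (w y + xgrad w y)) ∧
    (∀ ψ : R2 → ℝ, ContDiff ℝ 2 ψ → BddFun ψ → gradient ψ 0 = 0 →
      (∀ x, Lop w ψ x = w x) → ψ = fun y => -(1 / 2) * (w y + xgrad w y)) := by
  have h : Sm w := hw'
  obtain ⟨hw0, M, hM⟩ := ground_facts w hw h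
  obtain ⟨z0, z1, h01, hdiag⟩ := hess0 w h hw.radial
  have e : (fun y => -(1 / 2) * (w y + xgrad w y)) =
      fun y => -(1 / 2) * (w y + (y 0 * DD 0 w y + y 1 * DD 1 w y)) := by
    simp only [xgrad_eq]
  have hL := Lop_psi w h hw.eqn
  have hc : Sm (fun _ : R2 => (-(1/2) : ℝ)) := contDiff_const
  have hsm : Sm (fun y => -(1 / 2) * (w y + xgrad w y)) := by rw [e]; exact hc.mul h.u
  have hg : gradient (fun y => -(1 / 2) * (w y + xgrad w y)) 0 = 0 := by
    rw [gradient_zero_iff, e, DD_mul 0 hc h.u, DD_mul 1 hc h.u, DD_const, DD_const,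
      u_D w h, u_D w h, z0, z1]
    simp
  have hC2 : ContDiff ℝ 2 (fun y => -(1 / 2) * (w y + xgrad w y)) :=
    hsm.of_le two_le_top
  have hb : BddFun (fun y => -(1 / 2) * (w y + xgrad w y)) := by
    refine ⟨M, fun x => ?_⟩
    simp only [xgrad_eq]
    obtain ⟨a, b⟩ := hM x
    rw [abs_le] at *
    constructor <;> linarith [a.1, a.2, b.1, b.2]
  refine ⟨hL, hg, hC2, hb, ?_⟩
  intro ψ hψ hψb hψg hψL
  set φ : R2 → ℝ := fun y => -(1 / 2) * (w y + xgrad w y) with hφ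
  have dψ : Differentiable ℝ ψ := hψ.differentiable (by simp)
  have dφ : Differentiable ℝ φ := hsm.diff
  have ddiff : ∀ f : R2 → ℝ, ContDiff ℝ 2 f → ∀ i, Differentiable ℝ (DD i f) := by
    intro f hf i
    have : ContDiff ℝ 1 (fderiv ℝ f) := hf.fderiv_right (by norm_num)
    exact (this.clm_apply contDiff_const).differentiable (by simp)
  have hsub : ∀ (i : Fin 2) (f g : R2 → ℝ), Differentiable ℝ f → Differentiable ℝ g →
      DD i (fun x => f x - g x) = fun x => DD i f x - DD i g x := by
    intro i f g hf hg
    funext x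
    unfold DD
    rw [fderiv_fun_sub (hf x) (hg x)]; rfl
  obtain ⟨b1, b2, hξ⟩ := hker (fun x => ψ x - φ x) (hψ.sub hC2) (by
      obtain ⟨A, hA⟩ := hψb
      obtain ⟨B, hB⟩ := hb
      exact ⟨A + B, fun x => (abs_sub _ _).trans (add_le_add (hA x) (hB x))⟩) (by
      intro x
      have a := hψL x
      have b := hL x
      unfold Lop at a b ⊢
      rw [lap_eq] at a b ⊢
      rw [hsub 0 ψ φ dψ dφ, hsub 1 ψ φ dψ dφ, hsub 0 _ _ (ddiff ψ hψ 0) (ddiff φ hC2 0),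
        hsub 1 _ _ (ddiff ψ hψ 1) (ddiff φ hC2 1)]
      linear_combination a - b)
  have hξ' : (fun x => ψ x - φ x) = fun x => b1 * DD 0 w x + b2 * DD 1 w x := hξ
  have hcb : ∀ b : ℝ, Sm (fun _ : R2 => b) := fun b => contDiff_const
  have g1 := (gradient_zero_iff ψ 0).1 hψg
  have g2 := (gradient_zero_iff φ 0).1 hg
  have hD : ∀ i, DD i (fun x => ψ x - φ x) 0 = 0 := by
    intro i
    rw [hsub i ψ φ dψ dφ]
    fin_cases i
    · simp [g1.1, g2.1]
    · simp [g1.2, g2.2]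
  have hD' : ∀ i, b1 * DD i (DD 0 w) 0 + b2 * DD i (DD 1 w) 0 = 0 := by
    intro i
    have := hD i
    rw [hξ', DD_add i ((hcb b1).mul (h.dd 0)) ((hcb b2).mul (h.dd 1)),
      DD_mul i (hcb b1) (h.dd 0), DD_mul i (hcb b2) (h.dd 1), DD_const, DD_const] at this
    linarith
  have hl := hw.eqn 0
  rw [lap_eq] at hl
  have hp := hw.pos 0
  have hne : DD 0 (DD 0 w) 0 ≠ 0 := by
    intro hz
    rw [← hdiag, hz] at hl
    nlinarith
  have e0 := hD' 0
  have e1 := hD' 1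
  rw [h01] at e0
  rw [DD_comm h 1 0, h01, ← hdiag] at e1
  have B1 : b1 = 0 := by
    rcases mul_eq_zero.1 (show b1 * DD 0 (DD 0 w) 0 = 0 by linarith) with h | h
    · exact h
    · exact absurd h hne
  have B2 : b2 = 0 := by
    rcases mul_eq_zero.1 (show b2 * DD 0 (DD 0 w) 0 = 0 by linarith) with h | h
    · exact h
    · exact absurd h hne
  funext x
  have := congrFun hξ' x
  simp [B1, B2] at this
  linarith
end
end
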